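/- Let d ≥ 3 and θ ∈ (0,1), and let θ₀ = (d²+d−2)/(d²+d). There exists a constant C_θ < ∞, depending only on d and θ, with the following property. Let E, F ⊆ ℝ^d be measurable sets of finite positive measure for which there exist A > 0 and a measurable T ⊆ ℝ such that A/2 ≤ |{y ∈ ℝ^{d-1} : (t,y) ∈ F}| ≤ 2A for a.e. t ∈ T and |{y : (t,y) ∈ F}| = 0 for a.e. t ∉ T. If ε ∈ (0,1] and 𝒳(E,F) ≥ ε·|E|^{1/p_θ}·‖1_F‖_{L^{q_θ′}_t L^{r_θ′}_y}, then |E|^{1/p_{θ₀}}·|F|^{1/q_{θ₀}′} ≤ C_θ·ε^{−C_θ}·|E|^{1/p_θ}·‖1_F‖_{L^{q_θ′}_t L^{r_θ′}_y}. -/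

import Mathlib

open MeasureTheory ENNReal Set Filter
noncomputable section

/-- Points of `ℝ^d` written as `(s, x)` with `s ∈ ℝ`, `x ∈ ℝ^(d-1)` (here `n = d-1`). -/
abbrev Pt (n : ℕ) := ℝ × (Fin n → ℝ)

/-- The moment curve `γ(t) = (t, t², …, t^n)` in `ℝ^n`. -/
def mom (n : ℕ) (t : ℝ) : Fin n → ℝ := fun i => t ^ (i.1 + 1)

/-- The restricted X-ray transform `Xf(t,y) = ∫ f(s, y + s·γ(t)) ds` of a
nonnegative function `f` on `ℝ^d`. -/
def Xray (n : ℕ) (f : Pt n → ℝ) (z : Pt n) : ℝ≥0∞ :=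
  ∫⁻ s : ℝ, ENNReal.ofReal (f (s, z.2 + s • mom n z.1))

/-- Mixed norm `‖g‖_{L^q_t L^r_y}` for an `ℝ≥0∞`-valued function on `ℝ × Y`. -/
def mixedNormG {Y : Type*} [MeasurableSpace Y] (ν : Measure Y) (q r : ℝ)
    (g : ℝ × Y → ℝ≥0∞) : ℝ≥0∞ :=
  (∫⁻ t : ℝ, (∫⁻ y, g (t, y) ^ r ∂ν) ^ (q / r)) ^ (1 / q)

/-- Mixed norm `‖g‖_{L^q_t L^r_y}` on `ℝ^d = ℝ × ℝ^(d-1)`, `ℝ≥0∞`-valued functions. -/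
def mixedNorm (n : ℕ) (q r : ℝ) (g : Pt n → ℝ≥0∞) : ℝ≥0∞ :=
  mixedNormG volume q r g

/-- Mixed norm of a real-valued function. -/
def mixedNormR (n : ℕ) (q r : ℝ) (g : Pt n → ℝ) : ℝ≥0∞ :=
  mixedNorm n q r fun z => ENNReal.ofReal |g z|

/-- The `L^p` norm of a real-valued function on `ℝ^d`. -/
def LpN (n : ℕ) (p : ℝ) (f : Pt n → ℝ) : ℝ≥0∞ :=
  (∫⁻ z : Pt n, ENNReal.ofReal |f z| ^ p) ^ (1 / p)

/-- The `L^p` norm restricted to a set. -/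
def LpNOn (n : ℕ) (p : ℝ) (f : Pt n → ℝ) (S : Set (Pt n)) : ℝ≥0∞ :=
  (∫⁻ z in S, ENNReal.ofReal |f z| ^ p) ^ (1 / p)

/-- `p_θ`, defined by `1/p_θ = 1 - θ + θd/(d+2)`. -/
def pExp (d : ℕ) (θ : ℝ) : ℝ := (1 - θ + θ * d / (d + 2))⁻¹

/-- `q_θ`, defined by `1/q_θ = θd/(d+2)`. -/
def qExp (d : ℕ) (θ : ℝ) : ℝ := (θ * d / (d + 2))⁻¹

/-- `r_θ`, defined by `1/r_θ = 1 - θ + θ(d²-d-2)/(d²+d-2)`. -/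
def rExp (d : ℕ) (θ : ℝ) : ℝ :=
  (1 - θ + θ * ((d:ℝ)^2 - d - 2) / ((d:ℝ)^2 + d - 2))⁻¹

/-- Dual exponent `p' = p/(p-1)`. -/
def dualExp (p : ℝ) : ℝ := p / (p - 1)

/-- `θ₀ = (d²+d-2)/(d²+d)`, the exponent where `q_θ = r_θ`. -/
def theta0 (d : ℕ) : ℝ := ((d:ℝ)^2 + d - 2) / ((d:ℝ)^2 + d)

/-- The mixed norm `‖Xf‖_{L^{q_θ}_t L^{r_θ}_y}`. -/
def XNorm (d : ℕ) (θ : ℝ) (f : Pt (d-1) → ℝ) : ℝ≥0∞ :=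
  mixedNorm (d-1) (qExp d θ) (rExp d θ) (Xray (d-1) f)

/-- The source norm `‖f‖_{L^{p_θ}}`. -/
def srcNorm (d : ℕ) (θ : ℝ) (f : Pt (d-1) → ℝ) : ℝ≥0∞ := LpN (d-1) (pExp d θ) f

/-- The dual mixed norm `‖g‖_{L^{q_θ'}_t L^{r_θ'}_y}`. -/
def dualNorm (d : ℕ) (θ : ℝ) (g : Pt (d-1) → ℝ) : ℝ≥0∞ :=
  mixedNormR (d-1) (dualExp (qExp d θ)) (dualExp (rExp d θ)) g

/-- The operator norm `A_θ` of `X : L^{p_θ} → L^{q_θ}_t L^{r_θ}_y` (restricted to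
nonnegative functions). -/
def Aconst (d : ℕ) (θ : ℝ) : ℝ≥0∞ :=
  sSup { M | ∃ f : Pt (d-1) → ℝ, Measurable f ∧ 0 ≤ f ∧
    srcNorm d θ f = 1 ∧ M = XNorm d θ f }

/-- The bilinear pairing `𝒳(f,g) = ∫ Xf · g`. -/
def pairing (n : ℕ) (f g : Pt n → ℝ) : ℝ≥0∞ :=
  ∫⁻ z : Pt n, Xray n f z * ENNReal.ofReal (g z)

/-- Indicator function of a set, as a real-valued function. -/
def ind (n : ℕ) (E : Set (Pt n)) : Pt n → ℝ := E.indicator fun _ => (1:ℝ)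

/-- `𝒳(E,F) = ∫ X1_E · 1_F`. -/
def pairSet (n : ℕ) (E F : Set (Pt n)) : ℝ≥0∞ := pairing n (ind n E) (ind n F)

/-- Dyadic level set `E_j = {z : 2^j ≤ f(z) < 2^(j+1)}`. -/
def lev (n : ℕ) (f : Pt n → ℝ) (j : ℤ) : Set (Pt n) :=
  {z | (2:ℝ) ^ j ≤ f z ∧ f z < (2:ℝ) ^ (j + 1)}

/-- The measure of the slice `{y : (t,y) ∈ F}`. -/
def sliceVol (n : ℕ) (F : Set (Pt n)) (t : ℝ) : ℝ≥0∞ :=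
  volume {y : Fin n → ℝ | (t, y) ∈ F}

/-- `F_k^l = F_k ∩ π⁻¹{t : 2^l ≤ |{y : (t,y) ∈ F_k}| < 2^(l+1)}` where `F_k` is
the `k`-th level set of `g`. -/
def Fkl (n : ℕ) (g : Pt n → ℝ) (k l : ℤ) : Set (Pt n) :=
  lev n g k ∩ {z | (2:ℝ≥0∞) ^ l ≤ sliceVol n (lev n g k) z.1 ∧
    sliceVol n (lev n g k) z.1 < (2:ℝ≥0∞) ^ (l + 1)}

/-- `F_{kl}^m`: the `k`-th level set of `g`, restricted to `t` with
`2^l ≤ ∫ g(t,y)^{r'} dy < 2^(l+1)` and `2^m ≤ |{y : (t,y) ∈ F_k}| < 2^(m+1)`. -/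
def Fklm (n : ℕ) (r' : ℝ) (g : Pt n → ℝ) (k l m : ℤ) : Set (Pt n) :=
  lev n g k ∩
  {z | (2:ℝ≥0∞) ^ l ≤ (∫⁻ y, ENNReal.ofReal (g (z.1, y)) ^ r') ∧
    (∫⁻ y, ENNReal.ofReal (g (z.1, y)) ^ r') < (2:ℝ≥0∞) ^ (l + 1)} ∩
  {z | (2:ℝ≥0∞) ^ m ≤ sliceVol n (lev n g k) z.1 ∧
    sliceVol n (lev n g k) z.1 < (2:ℝ≥0∞) ^ (m + 1)}

/-- The lower-triangular matrix `G_{t₀}` with entries `C(m,i)·t₀^(m-i)`, acting on `ℝ^(d-1)`. -/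
def Gmat (n : ℕ) (t₀ : ℝ) (x : Fin n → ℝ) : Fin n → ℝ := fun m =>
  ∑ i ∈ Finset.univ.filter (fun i : Fin n => i ≤ m),
    ((Nat.choose (m.1+1) (i.1+1)) : ℝ) * t₀ ^ (m.1 - i.1) * x i

/-- The symmetry group `G_d` of the restricted X-ray transform, with the (constant)
Jacobian determinant carried along: `IsSymJ n φ J` means `φ ∈ G_d` with Jacobian `J`. -/
inductive IsSymJ (n : ℕ) : (Pt n → Pt n) → ℝ → Prop
  | translation (v : Fin n → ℝ) : IsSymJ n (fun p => (p.1, p.2 + v)) 1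
  | scaling (α β : ℝ) (hα : 0 < α) (hβ : 0 < β) :
      IsSymJ n (fun p => (α * p.1, fun i => α * β ^ (i.1 + 1) * p.2 i))
        (α ^ (n+1) * β ^ (n * (n+1) / 2))
  | shift (s₀ t₀ : ℝ) :
      IsSymJ n (fun p => (p.1 + s₀, Gmat n t₀ p.2 + (p.1 + s₀) • mom n t₀)) 1
  | comp (φ ψ : Pt n → Pt n) (J₁ J₂ : ℝ) :
      IsSymJ n φ J₁ → IsSymJ n ψ J₂ → IsSymJ n (φ ∘ ψ) (J₁ * J₂)

/-- The `L^p`-normalized action `φ*f = J^(1/p) · (f ∘ φ)` of a symmetry on functions. -/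
def symAct (n : ℕ) (p : ℝ) (J : ℝ) (φ : Pt n → Pt n) (f : Pt n → ℝ) : Pt n → ℝ :=
  fun z => J ^ (1/p) * f (φ z)

/-- Lorentz norm `‖h‖_{L^{p,s}}` (up to equivalence), via dyadic level sets. -/
def lorentzNorm {α : Type*} [MeasurableSpace α] (μ : Measure α) (p s : ℝ)
    (h : α → ℝ≥0∞) : ℝ≥0∞ :=
  (∑' j : ℤ, ((2:ℝ≥0∞) ^ j *
      μ {z | (2:ℝ≥0∞) ^ j ≤ h z ∧ h z < (2:ℝ≥0∞) ^ (j+1)} ^ (1/p)) ^ s) ^ (1/s)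

/-- Weak `L^{p,∞}` norm. -/
def weakNorm {α : Type*} [MeasurableSpace α] (μ : Measure α) (p : ℝ)
    (h : α → ℝ≥0∞) : ℝ≥0∞ :=
  ⨆ l : ℝ≥0∞, l * μ {z | l < h z} ^ (1/p)

/-- Mixed Lorentz norm `‖g‖_{L^{q,s}_t L^r_y}` (up to equivalence). -/
def mixedLorentzG {Y : Type*} [MeasurableSpace Y] (ν : Measure Y) (q s r : ℝ)
    (g : ℝ × Y → ℝ≥0∞) : ℝ≥0∞ :=
  (∑' l : ℤ, (mixedNormG ν q r
      (Set.indicator {z : ℝ × Y | (2:ℝ≥0∞) ^ l ≤ (∫⁻ y, g (z.1, y) ^ r ∂ν) ∧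
        (∫⁻ y, g (z.1, y) ^ r ∂ν) < (2:ℝ≥0∞) ^ (l+1)} g)) ^ s) ^ (1/s)

/-- Weak mixed norm `‖g‖_{L^{q,∞}_t L^r_y}`. -/
def weakMixedG {Y : Type*} [MeasurableSpace Y] (ν : Measure Y) (q r : ℝ)
    (g : ℝ × Y → ℝ≥0∞) : ℝ≥0∞ :=
  ⨆ l : ℝ≥0∞, l * (volume {t : ℝ | l < (∫⁻ y, g (t, y) ^ r ∂ν) ^ (1/r)}) ^ (1/q)

/-- The paraball `B(s₀,t₀,ȳ,α,β)`. -/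
def paraball (n : ℕ) (s₀ t₀ : ℝ) (ybar : Fin n → ℝ) (α β : ℝ) : Set (Pt n) :=
  {z | |z.1 - s₀| < α ∧ ∀ m : Fin n,
    |(∑ i ∈ Finset.univ.filter (fun i : Fin n => i ≤ m),
        ((Nat.choose (m.1+1) (i.1+1)) : ℝ) * (-t₀) ^ (m.1 - i.1) *
          (z.2 i - (ybar + s₀ • mom n t₀) i))
      + (-t₀) ^ (m.1+1) * (z.1 + s₀)| ≤ β ^ (m.1+1) * α}

/-- The dual paraball `B*(s₀,t₀,ȳ,α,β)`. -/
def dualParaball (n : ℕ) (s₀ t₀ : ℝ) (ybar : Fin n → ℝ) (α β : ℝ) : Set (Pt n) :=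
  {z | |z.1 - t₀| < β ∧ ∀ m : Fin n,
    |(∑ i ∈ Finset.univ.filter (fun i : Fin n => i ≤ m),
        ((Nat.choose (m.1+1) (i.1+1)) : ℝ) * (-t₀) ^ (m.1 - i.1) * (z.2 i - ybar i))
      + s₀ * (z.1 ^ (m.1+1) + (-t₀) ^ (m.1+1))| ≤ β ^ (m.1+1) * α}

/-- The mock-distance between two paraballs. -/
def mockDist (n : ℕ) (sa ta : ℝ) (ya : Fin n → ℝ) (aa ba : ℝ)
    (sb tb : ℝ) (yb : Fin n → ℝ) (ab bb : ℝ) : ℝ :=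
  (max (aa ^ n * ba ^ (n * (n+1) / 2)) (ab ^ n * bb ^ (n * (n+1) / 2)) /
    min (aa ^ n * ba ^ (n * (n+1) / 2)) (ab ^ n * bb ^ (n * (n+1) / 2)))
  + (aa / ab + ab / aa) + (ba / bb + bb / ba)
  + |sa - sb| * (1/aa + 1/ab) + |ta - tb| * (1/ba + 1/bb)
  + ∑ m : Fin n,
      |(∑ i ∈ Finset.univ.filter (fun i : Fin n => i ≤ m),
          ((Nat.choose (m.1+1) (i.1+1)) : ℝ) * (-ta) ^ (m.1 - i.1) *
            ((yb + sb • mom n tb) i - (ya + sa • mom n ta) i))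
        + (-ta) ^ (m.1+1) * (sb + sa)| / (aa * ba ^ (m.1+1))
  + ∑ m : Fin n,
      |(∑ i ∈ Finset.univ.filter (fun i : Fin n => i ≤ m),
          ((Nat.choose (m.1+1) (i.1+1)) : ℝ) * (-tb) ^ (m.1 - i.1) *
            ((ya + sa • mom n ta) i - (yb + sb • mom n tb) i))
        + (-tb) ^ (m.1+1) * (sa + sb)| / (ab * bb ^ (m.1+1))
  + ∑ m : Fin n,
      |(∑ i ∈ Finset.univ.filter (fun i : Fin n => i ≤ m),
          ((Nat.choose (m.1+1) (i.1+1)) : ℝ) * (-sa) ^ (m.1 - i.1) * (yb i - ya i))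
        + sa * (tb ^ (m.1+1) + (-ta) ^ (m.1+1))| / (aa * ba ^ (m.1+1))
  + ∑ m : Fin n,
      |(∑ i ∈ Finset.univ.filter (fun i : Fin n => i ≤ m),
          ((Nat.choose (m.1+1) (i.1+1)) : ℝ) * (-sb) ^ (m.1 - i.1) * (ya i - yb i))
        + sb * (ta ^ (m.1+1) + (-tb) ^ (m.1+1))| / (ab * bb ^ (m.1+1))

/-!
Identify `(t, y)` with the line `s ↦ (s, y + s • γ t)`, so that `𝒳(E, F)` counts incidences between
the points of `E` and the lines of `F`. Let `B θ = |E|^(1/p_θ) ‖1_F‖_{q_θ', r_θ'}`. At `θ = 0` one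
has `𝒳(E, F) ≤ B 0` by Fubini. At `θ = 1` one has `𝒳(E, F) ≲ B 1` by the method of refinements:
discarding the poor points and lines, one finds a line of `F` from which many chains of `d - 1`
steps, with separated line parameters, lead to `F`. For fixed line parameters, the endpoint of the
chain is an affine function of the `d - 1` intersection parameters whose Jacobian is a Vandermonde
determinant, and Hölder's inequality integrates its reciprocal over the line parameters, which
bounds the number of chains from above.

Up to constants `B θ = (B 0)^(1 - θ) (B 1)^θ`. Hence `ε B θ ≤ 𝒳(E, F)` with `0 < θ < 1` forces
`B 0` and `B 1` to be comparable up to a power of `ε⁻¹`, and then so are all the `B η`. At `η = θ₀`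
the exponents `q_η` and `r_η` coincide, and `B θ₀` is comparable to `|E|^(1/p_θ₀) |F|^(1/q_θ₀')`.
-/

/-- The kernel `|τ|⁻¹` truncated to `|τ| ≥ δ`. -/
def truncInv (δ τ : ℝ) : ℝ≥0∞ := if δ ≤ |τ| then ENNReal.ofReal |τ|⁻¹ else 0

lemma measurable_truncInv (δ : ℝ) : Measurable (truncInv δ) :=
  Measurable.ite (measurableSet_le measurable_const measurable_norm) (by fun_prop)
    measurable_const

lemma truncInv_neg (δ τ : ℝ) : truncInv δ (-τ) = truncInv δ τ := by
  simp only [truncInv, abs_neg]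

lemma lintegral_Ici_rpow_neg {p δ : ℝ} (hδ : 0 < δ) (hp : 1 < p) :
    ∫⁻ τ in Ici δ, ENNReal.ofReal (τ ^ (-p)) = ENNReal.ofReal (1 / (p - 1) * δ ^ (1 - p)) := by
  have hpos : ∀ τ ∈ Ioi δ, 0 ≤ τ ^ (-p) := fun τ hτ => Real.rpow_nonneg (hδ.trans hτ).le _
  rw [setLIntegral_congr Ioi_ae_eq_Ici.symm, ← ofReal_integral_eq_lintegral_ofReal
    (integrableOn_Ioi_rpow_of_lt (by linarith) hδ)
    (ae_restrict_of_forall_mem measurableSet_Ioi hpos), integral_Ioi_rpow_of_lt (by linarith) hδ]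
  congr 1
  rw [show -p + 1 = -(p - 1) by ring, show 1 - p = -(p - 1) by ring, neg_div_neg_eq]
  ring

lemma lintegral_truncInv_rpow_le {p δ : ℝ} (hδ : 0 < δ) (hp : 1 < p) :
    ∫⁻ τ, truncInv δ τ ^ p ≤ ENNReal.ofReal (2 / (p - 1) * δ ^ (1 - p)) := by
  set g : ℝ → ℝ≥0∞ := (Ici δ).indicator fun τ => ENNReal.ofReal (τ ^ (-p)) with hg
  have hle : ∀ τ, truncInv δ τ ^ p ≤ g τ + g (-τ) := by
    intro τ
    unfold truncInv
    split_ifs with h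
    · rw [ENNReal.ofReal_rpow_of_nonneg (by positivity) (by positivity),
        Real.inv_rpow (abs_nonneg τ), ← Real.rpow_neg (abs_nonneg τ)]
      rcases abs_choice τ with hτ | hτ <;> rw [hτ] at h ⊢
      · exact le_add_of_le_left (by rw [hg, indicator_of_mem (mem_Ici.2 h)])
      · exact le_add_of_le_right (by rw [hg, indicator_of_mem (mem_Ici.2 h)])
    · simp [ENNReal.zero_rpow_of_pos (zero_lt_one.trans hp)]
  have hgm : Measurable g := Measurable.indicator (by fun_prop) measurableSet_Ici
  have : 0 < p - 1 := sub_pos.2 hp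
  calc ∫⁻ τ, truncInv δ τ ^ p
      ≤ ∫⁻ τ, g τ + g (-τ) := lintegral_mono hle
    _ = (∫⁻ τ, g τ) + ∫⁻ τ, g τ := by
        rw [lintegral_add_left hgm, lintegral_neg_eq_self (f := g)]
    _ = ENNReal.ofReal (2 / (p - 1) * δ ^ (1 - p)) := by
        rw [hg, lintegral_indicator measurableSet_Ici, lintegral_Ici_rpow_neg hδ hp,
          ← ENNReal.ofReal_add (by positivity) (by positivity)]
        ring_nf

lemma lintegral_pi_eq_insertNth {α : Type*} [MeasureSpace α] [SigmaFinite (volume : Measure α)]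
    {n : ℕ} (i : Fin (n + 1)) {f : (Fin (n + 1) → α) → ℝ≥0∞} (hf : Measurable f) :
    ∫⁻ t, f t = ∫⁻ x : α, ∫⁻ u : Fin n → α, f (i.insertNth x u) := by
  have hvp := (volume_preserving_piFinSuccAbove (fun _ : Fin (n + 1) => α) i).symm
  rw [← hvp.lintegral_comp hf]
  exact lintegral_prod _ (hf.comp hvp.measurable).aemeasurable

lemma lintegral_pi_prod {α : Type*} [MeasureSpace α] [SigmaFinite (volume : Measure α)]
    {g : α → ℝ≥0∞} (hg : Measurable g) (n : ℕ) :
    ∫⁻ t : Fin n → α, ∏ k, g (t k) = (∫⁻ x, g x) ^ n := by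
  induction n with
  | zero => simp [volume_pi]
  | succ n ih =>
    rw [lintegral_pi_eq_insertNth 0 (by fun_prop)]
    simp only [Fin.prod_univ_succ, Fin.insertNth_zero', Fin.cons_zero, Fin.cons_succ]
    simp_rw [lintegral_const_mul _ (show Measurable fun u : Fin n → α => ∏ k, g (u k) by fun_prop),
      ih, lintegral_mul_const _ hg, pow_succ']

lemma measurable_fin_cons {α : Type*} [MeasurableSpace α] {n : ℕ} (x : α) :
    Measurable fun u : Fin n → α => (Fin.cons x u : Fin (n + 1) → α) := by
  refine measurable_pi_iff.2 fun i => ?_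
  cases i using Fin.cases <;> simp only [Fin.cons_zero, Fin.cons_succ] <;> fun_prop

section EvenKernel

variable {φ : ℝ → ℝ≥0∞}

lemma measurable_prod_succAbove_sub (hφ : Measurable φ) {n : ℕ} (t₀ : ℝ) (v : Fin (n + 1)) :
    Measurable fun t : Fin n → ℝ => ∏ k : Fin n,
      φ ((Fin.cons t₀ t : Fin (n + 1) → ℝ) (v.succAbove k) -
        (Fin.cons t₀ t : Fin (n + 1) → ℝ) v) := by
  have h := measurable_fin_cons (n := n) t₀
  fun_prop

lemma lintegral_prod_succAbove_sub (hφ : Measurable φ) (heven : ∀ τ, φ (-τ) = φ τ) {n : ℕ} (t₀ : ℝ)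
    (v : Fin (n + 1)) :
    ∫⁻ t : Fin n → ℝ, ∏ k : Fin n, φ ((Fin.cons t₀ t : Fin (n + 1) → ℝ) (v.succAbove k) -
      (Fin.cons t₀ t : Fin (n + 1) → ℝ) v) = (∫⁻ τ, φ τ) ^ n := by
  have hshift : ∀ c m, ∫⁻ u : Fin m → ℝ, ∏ k, φ (u k - c) = (∫⁻ τ, φ τ) ^ m := fun c m => by
    rw [lintegral_pi_prod (g := fun τ => φ (τ - c)) (by fun_prop),
      lintegral_sub_right_eq_self]
  cases v using Fin.cases with
  | zero => simpa using hshift t₀ n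
  | succ i =>
    obtain ⟨m, rfl⟩ : ∃ m, n = m + 1 := ⟨n - 1, by have := i.pos; omega⟩
    rw [lintegral_pi_eq_insertNth i (measurable_prod_succAbove_sub hφ t₀ i.succ)]
    have hsplit : ∀ (x : ℝ) (u : Fin m → ℝ), (∏ k : Fin (m + 1),
        φ ((Fin.cons t₀ (i.insertNth x u : Fin (m + 1) → ℝ) : Fin (m + 2) → ℝ)
            (i.succ.succAbove k) -
          (Fin.cons t₀ (i.insertNth x u : Fin (m + 1) → ℝ) : Fin (m + 2) → ℝ) i.succ)) =
        φ (x - t₀) * ∏ k, φ (u k - x) := fun x u => by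
      rw [← heven (x - t₀)]
      simp [Fin.prod_univ_succ]
    have hmeas : ∀ x, Measurable fun u : Fin m → ℝ => ∏ k, φ (u k - x) := fun x => by fun_prop
    simp_rw [hsplit, lintegral_const_mul _ (hmeas _), hshift]
    rw [lintegral_mul_const _ (by fun_prop), lintegral_sub_right_eq_self, pow_succ']

-- Distributing each factor evenly between the endpoints of its edge writes the complete-graph
-- product as a geometric mean of `n + 1` star products, which Hölder's inequality decouples.
lemma lintegral_prod_Ioi_le (hφ : Measurable φ) (heven : ∀ τ, φ (-τ) = φ τ) (n : ℕ) (t₀ : ℝ) :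
    ∫⁻ t : Fin n → ℝ, ∏ i : Fin (n + 1), ∏ j ∈ Finset.Ioi i,
      φ ((Fin.cons t₀ t : Fin (n + 1) → ℝ) j - (Fin.cons t₀ t : Fin (n + 1) → ℝ) i) ≤
      (∫⁻ τ, φ τ ^ ((n + 1) / 2 : ℝ)) ^ n := by
  set T : (Fin n → ℝ) → Fin (n + 1) → ℝ := fun t => Fin.cons t₀ t
  set ψ : ℝ → ℝ≥0∞ := fun τ => φ τ ^ ((n + 1) / 2 : ℝ) with hψ_def
  have hψ : Measurable ψ := by fun_prop
  have hψ_even : ∀ τ, ψ (-τ) = ψ τ := fun τ => by simp only [hψ_def, heven]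
  have hn : (0 : ℝ) < n + 1 := by positivity
  have hroot : ∀ τ, ψ τ ^ (1 / (n + 1) : ℝ) * ψ (-τ) ^ (1 / (n + 1) : ℝ) = φ τ := fun τ => by
    rw [hψ_even, ← ENNReal.rpow_add_of_nonneg _ _ (by positivity) (by positivity),
      ← ENNReal.rpow_mul,
      show ((n + 1) / 2 * (1 / (n + 1) + 1 / (n + 1)) : ℝ) = 1 by field_simp; ring,
      ENNReal.rpow_one]
  have hstars : ∀ t, ∏ i, ∏ j ∈ Finset.Ioi i, φ (T t j - T t i) =
      ∏ v, (∏ k, ψ (T t (v.succAbove k) - T t v)) ^ (1 / (n + 1) : ℝ) := fun t => by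
    have hedge : ∀ i j, φ (T t j - T t i) = ψ (T t j - T t i) ^ (1 / (n + 1) : ℝ) *
        ψ (T t i - T t j) ^ (1 / (n + 1) : ℝ) := fun i j => by
      rw [← hroot (T t j - T t i), neg_sub]
    simp_rw [hedge]
    rw [Finset.prod_prod_Ioi_mul_eq_prod_prod_off_diag
      (fun j i => ψ (T t j - T t i) ^ (1 / (n + 1) : ℝ))]
    refine Finset.prod_congr rfl fun v _ => ?_
    rw [← Fin.image_succAbove_univ, Finset.prod_image Fin.succAbove_right_injective.injOn,
      ENNReal.prod_rpow_of_nonneg (by positivity)]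
  calc ∫⁻ t, ∏ i, ∏ j ∈ Finset.Ioi i, φ (T t j - T t i)
      = ∫⁻ t, ∏ v, (∏ k, ψ (T t (v.succAbove k) - T t v)) ^ (1 / (n + 1) : ℝ) :=
        lintegral_congr hstars
    _ ≤ ∏ v, (∫⁻ t, ∏ k, ψ (T t (v.succAbove k) - T t v)) ^ (1 / (n + 1) : ℝ) :=
        ENNReal.lintegral_prod_norm_pow_le _
          (fun v _ => (measurable_prod_succAbove_sub hψ t₀ v).aemeasurable) (by simp; field_simp)
          fun _ _ => by positivity
    _ = (∫⁻ τ, ψ τ) ^ n := by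
        simp_rw [T, lintegral_prod_succAbove_sub hψ hψ_even t₀]
        rw [Finset.prod_const, Finset.card_univ, Fintype.card_fin, ← ENNReal.rpow_natCast (_ ^ _),
          ← ENNReal.rpow_mul, Nat.cast_add_one, one_div_mul_cancel hn.ne', ENNReal.rpow_one]

end EvenKernel

section Incidence

variable {n : ℕ} {γ : ℝ → Fin n → ℝ} {E F : Set (Pt n)}

/-- The parameters `s` at which the line `s ↦ (s, y + s • γ t)` through `z = (t, y)` meets `E`. -/
def lineFiber (γ : ℝ → Fin n → ℝ) (E : Set (Pt n)) (z : Pt n) : Set ℝ :=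
  {s | (s, z.2 + s • γ z.1) ∈ E}

/-- The parameters `t` of the lines in `F` that pass through the point `x`. -/
def curveFiber (γ : ℝ → Fin n → ℝ) (F : Set (Pt n)) (x : Pt n) : Set ℝ :=
  {t | (t, x.2 - x.1 • γ t) ∈ F}

/-- The pairing `𝒳(E, F)` for lines with directions on an arbitrary curve `γ`. -/
def incidence (γ : ℝ → Fin n → ℝ) (E F : Set (Pt n)) : ℝ≥0∞ :=
  ∫⁻ z in F, volume (lineFiber γ E z)

lemma measurableSet_setOf_lineFiber (hγ : Measurable γ) (hE : MeasurableSet E) :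
    MeasurableSet {w : Pt n × ℝ | w.2 ∈ lineFiber γ E w.1} :=
  hE.preimage (f := fun w : Pt n × ℝ => (w.2, w.1.2 + w.2 • γ w.1.1)) (by fun_prop)

lemma measurableSet_setOf_curveFiber (hγ : Measurable γ) (hF : MeasurableSet F) :
    MeasurableSet {w : Pt n × ℝ | w.2 ∈ curveFiber γ F w.1} :=
  hF.preimage (f := fun w : Pt n × ℝ => (w.2, w.1.2 - w.1.1 • γ w.2)) (by fun_prop)

lemma measurableSet_lineFiber (hγ : Measurable γ) (hE : MeasurableSet E) (z : Pt n) :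
    MeasurableSet (lineFiber γ E z) :=
  measurable_prodMk_left (measurableSet_setOf_lineFiber hγ hE)

lemma measurableSet_curveFiber (hγ : Measurable γ) (hF : MeasurableSet F) (x : Pt n) :
    MeasurableSet (curveFiber γ F x) :=
  measurable_prodMk_left (measurableSet_setOf_curveFiber hγ hF)

lemma measurable_volume_lineFiber (hγ : Measurable γ) (hE : MeasurableSet E) :
    Measurable fun z => volume (lineFiber γ E z) :=
  measurable_measure_prodMk_left (measurableSet_setOf_lineFiber hγ hE)

lemma measurable_volume_curveFiber (hγ : Measurable γ) (hF : MeasurableSet F) :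
    Measurable fun x => volume (curveFiber γ F x) :=
  measurable_measure_prodMk_left (measurableSet_setOf_curveFiber hγ hF)

lemma lintegral_lintegral_line_mul (hγ : Measurable γ) {f g : Pt n → ℝ≥0∞} (hf : Measurable f)
    (hg : Measurable g) :
    ∫⁻ z : Pt n, (∫⁻ s, f (s, z.2 + s • γ z.1)) * g z =
      ∫⁻ x : Pt n, f x * ∫⁻ t, g (t, x.2 - x.1 • γ t) := by
  calc ∫⁻ z : Pt n, (∫⁻ s, f (s, z.2 + s • γ z.1)) * g z
      = ∫⁻ z : Pt n, ∫⁻ s, f (s, z.2 + s • γ z.1) * g z := by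
        refine lintegral_congr fun z => (lintegral_mul_const _ ?_).symm
        fun_prop
    _ = ∫⁻ t, ∫⁻ y, ∫⁻ s, f (s, y + s • γ t) * g (t, y) := by
        rw [Measure.volume_eq_prod, lintegral_prod _ (Measurable.aemeasurable ?_)]
        exact Measurable.lintegral_prod_right' (f := fun w : Pt n × ℝ =>
          f (w.2, w.1.2 + w.2 • γ w.1.1) * g w.1) (by fun_prop)
    _ = ∫⁻ t, ∫⁻ s, ∫⁻ y, f (s, y + s • γ t) * g (t, y) :=
        lintegral_congr fun t => lintegral_lintegral_swap (Measurable.aemeasurable (by fun_prop))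
    _ = ∫⁻ t, ∫⁻ s, ∫⁻ y, f (s, y) * g (t, y - s • γ t) := by
        refine lintegral_congr fun t => lintegral_congr fun s => ?_
        rw [← lintegral_add_right_eq_self (fun y => f (s, y) * g (t, y - s • γ t)) (s • γ t)]
        simp only [add_sub_cancel_right]
    _ = ∫⁻ t, ∫⁻ x : Pt n, f x * g (t, x.2 - x.1 • γ t) := by
        refine lintegral_congr fun t => ?_
        rw [Measure.volume_eq_prod, lintegral_prod _ (Measurable.aemeasurable (by fun_prop))]
    _ = ∫⁻ x : Pt n, ∫⁻ t, f x * g (t, x.2 - x.1 • γ t) :=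
        lintegral_lintegral_swap (Measurable.aemeasurable (by fun_prop))
    _ = ∫⁻ x : Pt n, f x * ∫⁻ t, g (t, x.2 - x.1 • γ t) := by
        refine lintegral_congr fun x => lintegral_const_mul _ ?_
        fun_prop

lemma incidence_eq_lintegral_curveFiber (hγ : Measurable γ) (hE : MeasurableSet E)
    (hF : MeasurableSet F) : incidence γ E F = ∫⁻ x in E, volume (curveFiber γ F x) := by
  classical
  have hline : ∀ z, ∫⁻ s, E.indicator 1 (s, z.2 + s • γ z.1) = volume (lineFiber γ E z) :=
    fun z => lintegral_indicator_one (measurableSet_lineFiber hγ hE z)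
  have hcurve : ∀ x, ∫⁻ t, F.indicator 1 (t, x.2 - x.1 • γ t) = volume (curveFiber γ F x) :=
    fun x => lintegral_indicator_one (measurableSet_curveFiber hγ hF x)
  have h := lintegral_lintegral_line_mul hγ (f := E.indicator 1) (g := F.indicator 1)
    (measurable_one.indicator hE) (measurable_one.indicator hF)
  simp only [hline, hcurve] at h
  rw [incidence, ← lintegral_indicator hF, ← lintegral_indicator hE]
  simpa only [indicator_apply, Pi.one_apply, mul_ite, ite_mul, mul_one, mul_zero, one_mul,
    zero_mul] using h

lemma lintegral_volume_lineFiber (hγ : Measurable γ) (hE : MeasurableSet E) (t : ℝ) :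
    ∫⁻ y, volume (lineFiber γ E (t, y)) = volume E := by
  have hind : Measurable (E.indicator (1 : Pt n → ℝ≥0∞)) := measurable_one.indicator hE
  calc ∫⁻ y, volume (lineFiber γ E (t, y))
      = ∫⁻ y, ∫⁻ s, E.indicator 1 (s, y + s • γ t) := lintegral_congr fun y =>
        (lintegral_indicator_one (measurableSet_lineFiber hγ hE (t, y))).symm
    _ = ∫⁻ s, ∫⁻ y, E.indicator 1 (s, y + s • γ t) :=
        lintegral_lintegral_swap (Measurable.aemeasurable (by fun_prop))
    _ = ∫⁻ s, ∫⁻ y, E.indicator 1 (s, y) :=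
        lintegral_congr fun s =>
          lintegral_add_right_eq_self (fun y => E.indicator 1 (s, y)) (s • γ t)
    _ = volume E := by
        rw [← lintegral_prod _ hind.aemeasurable, ← Measure.volume_eq_prod,
          lintegral_indicator_one hE]

lemma incidence_le_volume_support_mul (hγ : Measurable γ) (hE : MeasurableSet E)
    (hF : MeasurableSet F) :
    incidence γ E F ≤ volume (Function.support (sliceVol n F)) * volume E := by
  have hm : Measurable (F.indicator fun z => volume (lineFiber γ E z)) :=
    (measurable_volume_lineFiber hγ hE).indicator hF
  rw [incidence, ← lintegral_indicator hF, Measure.volume_eq_prod, lintegral_prod _ hm.aemeasurable,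
    mul_comm, ← setLIntegral_const]
  refine (lintegral_mono fun t => ?_).trans (lintegral_indicator_le _ _)
  by_cases ht : sliceVol n F t = 0
  · have hae : ∀ᵐ y, (t, y) ∉ F := measure_eq_zero_iff_ae_notMem.1 ht
    rw [lintegral_congr_ae (hae.mono fun y hy => indicator_of_notMem hy _), lintegral_zero]
    exact zero_le
  · rw [indicator_of_mem (Function.mem_support.2 ht), ← Measure.volume_eq_prod,
      ← lintegral_volume_lineFiber hγ hE t]
    exact lintegral_mono fun y => indicator_le_self' (fun _ _ => zero_le) _

end Incidence

section Refinement

variable {n : ℕ} {γ : ℝ → Fin n → ℝ} {E F : Set (Pt n)} {a b c : ℝ≥0∞}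

/-- The points of `E` lying on a set of lines of `F` of measure at least `b`. -/
def richPoints (γ : ℝ → Fin n → ℝ) (E F : Set (Pt n)) (b : ℝ≥0∞) : Set (Pt n) :=
  {x ∈ E | b ≤ volume (curveFiber γ F x)}

/-- The lines of `F` meeting `E` in a set of measure at least `a`. -/
def richLines (γ : ℝ → Fin n → ℝ) (E F : Set (Pt n)) (a : ℝ≥0∞) : Set (Pt n) :=
  {z ∈ F | a ≤ volume (lineFiber γ E z)}

lemma measurableSet_richPoints (hγ : Measurable γ) (hE : MeasurableSet E) (hF : MeasurableSet F) :
    MeasurableSet (richPoints γ E F b) :=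
  hE.inter (measurableSet_le measurable_const (measurable_volume_curveFiber hγ hF))

lemma measurableSet_richLines (hγ : Measurable γ) (hE : MeasurableSet E) (hF : MeasurableSet F) :
    MeasurableSet (richLines γ E F a) :=
  hF.inter (measurableSet_le measurable_const (measurable_volume_lineFiber hγ hE))

-- Discarding the part of `S` where `f < b` loses at most `b` per unit of measure on either side.
lemma lt_setLIntegral_superlevel {α : Type*} [MeasurableSpace α] {μ : Measure α} {S : Set α}
    (hS : MeasurableSet S) {f : α → ℝ≥0∞} (hf : Measurable f)
    (h : b * μ S + c < ∫⁻ x in S, f x ∂μ) :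
    b * μ {x ∈ S | b ≤ f x} + c < ∫⁻ x in {x ∈ S | b ≤ f x}, f x ∂μ := by
  set S' := {x ∈ S | b ≤ f x}
  have hS' : MeasurableSet S' := hS.inter (measurableSet_le measurable_const hf)
  have hsub : S ∩ S' = S' := inter_eq_self_of_subset_right (sep_subset _ _)
  have hpoor : ∫⁻ x in S \ S', f x ∂μ ≤ b * μ (S \ S') := by
    rw [← setLIntegral_const]
    exact setLIntegral_mono measurable_const fun x hx => (not_le.1 fun hb => hx.2 ⟨hx.1, hb⟩).le
  rw [← measure_sdiff_add_inter S hS', ← lintegral_inter_add_sdiff f S hS', hsub, mul_add,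
    add_assoc, add_comm (∫⁻ x in S', f x ∂μ)] at h
  exact lt_of_add_lt_add_left (h.trans_le (add_le_add_left hpoor _))

lemma lt_incidence_richPoints (hγ : Measurable γ) (hE : MeasurableSet E) (hF : MeasurableSet F)
    (h : b * volume E + c < incidence γ E F) :
    b * volume (richPoints γ E F b) + c < incidence γ (richPoints γ E F b) F := by
  rw [incidence_eq_lintegral_curveFiber hγ hE hF] at h
  rw [incidence_eq_lintegral_curveFiber hγ (measurableSet_richPoints hγ hE hF) hF]
  exact lt_setLIntegral_superlevel hE (measurable_volume_curveFiber hγ hF) h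

lemma lt_incidence_richLines (hγ : Measurable γ) (hE : MeasurableSet E) (hF : MeasurableSet F)
    (h : a * volume F + c < incidence γ E F) :
    a * volume (richLines γ E F a) + c < incidence γ E (richLines γ E F a) :=
  lt_setLIntegral_superlevel hF (measurable_volume_lineFiber hγ hE) h

end Refinement

section Chains

variable {n k : ℕ} {γ : ℝ → Fin n → ℝ} {E F F' : Set (Pt n)} {a b : ℝ≥0∞} {δ : ℝ}

/-- The line with parameter `q.2` through the point of the line `z` with parameter `q.1`. -/
def nextLine (γ : ℝ → Fin n → ℝ) (z : Pt n) (q : ℝ × ℝ) : Pt n :=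
  (q.2, z.2 + q.1 • γ z.1 - q.1 • γ q.2)

/-- The parameters of the `k + 1` lines of the chain that starts at the line `z` and takes the
`i`-th step through the point with parameter `(p i).1` to the line with parameter `(p i).2`. -/
def chainTimes (z : Pt n) (p : Fin k → ℝ × ℝ) : Fin (k + 1) → ℝ :=
  Fin.cons z.1 fun i => (p i).2

/-- The last line of the chain described at `chainTimes`. -/
def chainEndpoint (γ : ℝ → Fin n → ℝ) (z : Pt n) (p : Fin k → ℝ × ℝ) : Pt n :=
  (chainTimes z p (Fin.last k),
    z.2 + ∑ i, (p i).1 • (γ (chainTimes z p i.castSucc) - γ (chainTimes z p i.succ)))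

/-- The `k`-step chains from `z` to a line of `F` whose line parameters are `δ`-separated. -/
def chains (γ : ℝ → Fin n → ℝ) (F : Set (Pt n)) (δ : ℝ) (z : Pt n) (k : ℕ) :
    Set (Fin k → ℝ × ℝ) :=
  {p | chainEndpoint γ z p ∈ F ∧
    Pairwise fun i j => δ ≤ |chainTimes z p i - chainTimes z p j|}

lemma chainTimes_snoc (z : Pt n) (p : Fin k → ℝ × ℝ) (q : ℝ × ℝ) :
    chainTimes z (Fin.snoc p q : Fin (k + 1) → ℝ × ℝ) =
      (Fin.snoc (chainTimes z p) q.2 : Fin (k + 2) → ℝ) := by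
  rw [chainTimes, chainTimes, ← Fin.cons_snoc_eq_snoc_cons]
  congr 1
  ext i
  refine Fin.lastCases ?_ (fun i => ?_) i <;> simp

lemma chainEndpoint_snoc (z : Pt n) (p : Fin k → ℝ × ℝ) (q : ℝ × ℝ) :
    chainEndpoint γ z (Fin.snoc p q : Fin (k + 1) → ℝ × ℝ) =
      nextLine γ (chainEndpoint γ z p) q := by
  simp only [chainEndpoint, nextLine, chainTimes_snoc, Fin.sum_univ_castSucc, Fin.snoc_castSucc,
    Fin.snoc_last, Fin.succ_castSucc, Fin.succ_last, smul_sub, add_sub_assoc, add_assoc]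

lemma snoc_mem_chains {z : Pt n} {p : Fin k → ℝ × ℝ} {q : ℝ × ℝ} (hp : p ∈ chains γ F' δ z k)
    (hq : nextLine γ (chainEndpoint γ z p) q ∈ F)
    (hsep : ∀ i, δ ≤ |q.2 - chainTimes z p i|) :
    (Fin.snoc p q : Fin (k + 1) → ℝ × ℝ) ∈ chains γ F δ z (k + 1) := by
  refine ⟨by rwa [chainEndpoint_snoc], ?_⟩
  rw [chainTimes_snoc]
  intro i j hij
  cases i using Fin.lastCases with
  | last =>
    cases j using Fin.lastCases with
    | last => exact absurd rfl hij
    | cast j => simpa only [Fin.snoc_last, Fin.snoc_castSucc] using hsep j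
  | cast i =>
    cases j using Fin.lastCases with
    | last => simpa only [Fin.snoc_last, Fin.snoc_castSucc, abs_sub_comm] using hsep i
    | cast j =>
      simpa only [Fin.snoc_castSucc] using hp.2 fun h : i = j => hij (h ▸ rfl)

lemma measurable_chainTimes (z : Pt n) :
    Measurable fun p : Fin k → ℝ × ℝ => chainTimes z p :=
  (measurable_fin_cons z.1).comp (by fun_prop)

lemma measurable_chainEndpoint (hγ : Measurable γ) (z : Pt n) :
    Measurable fun p : Fin k → ℝ × ℝ => chainEndpoint γ z p := by
  have := measurable_chainTimes (k := k) z
  unfold chainEndpoint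
  fun_prop

lemma measurableSet_chains (hγ : Measurable γ) (hF : MeasurableSet F) (z : Pt n) :
    MeasurableSet (chains γ F δ z k) := by
  have := measurable_chainTimes (k := k) z
  have hsep : {p : Fin k → ℝ × ℝ | Pairwise fun i j => δ ≤ |chainTimes z p i - chainTimes z p j|} =
      ⋂ i, ⋂ j, ⋂ _ : i ≠ j, {p | δ ≤ |chainTimes z p i - chainTimes z p j|} := by
    ext p
    simp [Pairwise]
  refine (hF.preimage (measurable_chainEndpoint hγ z)).inter
    (MeasurableSet.congr ?_ hsep.symm)
  exact MeasurableSet.iInter fun i => MeasurableSet.iInter fun j => MeasurableSet.iInter fun _ =>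
    measurableSet_le measurable_const (by fun_prop)

lemma mul_half_le_volume_nextLine (hγ : Measurable γ) (hE : MeasurableSet E)
    (hF : MeasurableSet F) (hb : b ≠ ∞) {z : Pt n}
    (hz : z ∈ richLines γ (richPoints γ E F b) F a) {N : Set ℝ} (hN : MeasurableSet N)
    (hNb : volume N ≤ b / 2) :
    a * (b / 2) ≤ volume {q : ℝ × ℝ | nextLine γ z q ∈ F ∧ q.2 ∉ N} := by
  have hmeas : MeasurableSet {q : ℝ × ℝ | nextLine γ z q ∈ F ∧ q.2 ∉ N} := by
    refine (hF.preimage ?_).inter (hN.compl.preimage measurable_snd)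
    unfold nextLine
    fun_prop
  have hlines := measurableSet_lineFiber hγ (measurableSet_richPoints (b := b) hγ hE hF) z
  have hstep : ∀ s ∈ lineFiber γ (richPoints γ E F b) z,
      b / 2 ≤ volume {t | nextLine γ z (s, t) ∈ F ∧ t ∉ N} := fun s hs =>
    calc b / 2 = b - b / 2 := (ENNReal.sub_half hb).symm
      _ ≤ volume (curveFiber γ F (s, z.2 + s • γ z.1)) - volume N := tsub_le_tsub hs.2 hNb
      _ ≤ volume (curveFiber γ F (s, z.2 + s • γ z.1) \ N) := le_measure_sdiff
  rw [Measure.volume_eq_prod, Measure.prod_apply hmeas]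
  calc a * (b / 2)
      ≤ b / 2 * volume (lineFiber γ (richPoints γ E F b) z) := by
        rw [mul_comm]
        gcongr
        exact hz.2
    _ ≤ ∫⁻ s, volume {t | nextLine γ z (s, t) ∈ F ∧ t ∉ N} := by
        rw [← setLIntegral_const]
        exact (setLIntegral_mono' hlines hstep).trans (setLIntegral_le_lintegral _ _)

lemma volume_pi_eq_lintegral_snoc {α : Type*} [MeasureSpace α] [SigmaFinite (volume : Measure α)]
    {S : Set (Fin (k + 1) → α)} (hS : MeasurableSet S) :
    volume S = ∫⁻ p : Fin k → α, volume {q : α | (Fin.snoc p q : Fin (k + 1) → α) ∈ S} := by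
  have hvp := (volume_preserving_piFinSuccAbove (fun _ : Fin (k + 1) => α) (Fin.last k)).symm
  rw [← hvp.measure_preimage hS.nullMeasurableSet, Measure.volume_eq_prod,
    Measure.prod_apply_symm (hvp.measurable hS)]
  refine lintegral_congr fun p => congrArg volume (ext fun q => ?_)
  exact iff_of_eq (congrArg (· ∈ S) (Fin.insertNth_last' q p))

lemma volume_iUnion_ball_le (T : Fin k → ℝ) (δ : ℝ) :
    volume (⋃ i, Metric.ball (T i) δ) ≤ k * ENNReal.ofReal (2 * δ) :=
  (measure_iUnion_fintype_le _ _).trans (by simp [Real.volume_ball])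

-- Each step uses up one refinement: chains ending in the refined set of lines extend by one step.
theorem exists_pow_le_volume_chains (hγ : Measurable γ) (hb : b ≠ ∞)
    (hδ : k * ENNReal.ofReal (2 * δ) ≤ b / 2) (hE : MeasurableSet E) (hF : MeasurableSet F)
    (h : b * volume E + a * volume F < incidence γ E F) :
    ∃ z ∈ F, (a * (b / 2)) ^ k ≤ volume (chains γ F δ z k) := by
  induction k generalizing E F with
  | zero =>
    obtain ⟨z, hz⟩ : F.Nonempty := by
      rw [nonempty_iff_ne_empty]
      rintro rfl
      simp [incidence] at h
    refine ⟨z, hz, ?_⟩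
    have huniv : chains γ F δ z 0 = univ :=
      eq_univ_of_forall fun p => ⟨by simpa [chainEndpoint, chainTimes] using hz,
        fun i j hij => absurd (Subsingleton.elim (α := Fin 1) i j) hij⟩
    simp [huniv, volume_pi]
  | succ k ih =>
    set E' := richPoints γ E F b
    set F' := richLines γ E' F a
    have hE' : MeasurableSet E' := measurableSet_richPoints hγ hE hF
    have hF' : MeasurableSet F' := measurableSet_richLines hγ hE' hF
    have h' : b * volume E' + a * volume F' < incidence γ E' F' := by
      rw [add_comm]
      refine lt_incidence_richLines hγ hE' hF ?_
      rw [add_comm]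
      exact lt_incidence_richPoints hγ hE hF h
    obtain ⟨z, hz, hk⟩ := ih (hδ.trans' (by gcongr; simp)) hE' hF' h'
    refine ⟨z, hz.1, ?_⟩
    have hext : ∀ p ∈ chains γ F' δ z k, a * (b / 2) ≤
        volume {q : ℝ × ℝ | (Fin.snoc p q : Fin (k + 1) → ℝ × ℝ) ∈ chains γ F δ z (k + 1)} := by
      intro p hp
      refine (mul_half_le_volume_nextLine hγ hE hF hb hp.1
        (MeasurableSet.iUnion fun i => (Metric.isOpen_ball (x := chainTimes z p i)).measurableSet)
        ((volume_iUnion_ball_le _ δ).trans hδ)).trans (measure_mono fun q hq => ?_)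
      refine snoc_mem_chains hp hq.1 fun i => ?_
      simpa [Real.dist_eq] using fun hi => hq.2 (mem_iUnion.2 ⟨i, hi⟩)
    calc (a * (b / 2)) ^ (k + 1)
        ≤ a * (b / 2) * volume (chains γ F' δ z k) := by rw [pow_succ']; gcongr
      _ ≤ ∫⁻ p, volume {q : ℝ × ℝ |
            (Fin.snoc p q : Fin (k + 1) → ℝ × ℝ) ∈ chains γ F δ z (k + 1)} := by
          rw [← setLIntegral_const]
          exact (setLIntegral_mono' (measurableSet_chains hγ hF' z) hext).trans
            (setLIntegral_le_lintegral _ _)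
      _ = volume (chains γ F δ z (k + 1)) :=
          (volume_pi_eq_lintegral_snoc (measurableSet_chains hγ hF z)).symm

end Chains

section ChangeOfVariables

variable {n : ℕ}

/-- The matrix whose rows are the consecutive chords `γ (T i) - γ (T (i + 1))`. -/
def chordMatrix (γ : ℝ → Fin n → ℝ) (T : Fin (n + 1) → ℝ) : Matrix (Fin n) (Fin n) ℝ :=
  Matrix.of fun i => γ (T i.castSucc) - γ (T i.succ)

-- Subtracting from each row of the Vandermonde matrix the row above it leaves `1, 0, …, 0` in the
-- first column and minus the chord matrix in the remaining block.
lemma abs_det_chordMatrix_mom (T : Fin (n + 1) → ℝ) :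
    |(chordMatrix (mom n) T).det| = ∏ i, ∏ j ∈ Finset.Ioi i, |T j - T i| := by
  set B : Matrix (Fin (n + 1)) (Fin (n + 1)) ℝ := Matrix.of fun i j =>
    Fin.cases (T 0 ^ (j : ℕ)) (fun k : Fin n => T k.succ ^ (j : ℕ) - T k.castSucc ^ (j : ℕ)) i
    with hB
  have hrows : (Matrix.vandermonde T).det = B.det :=
    Matrix.det_eq_of_forall_row_eq_smul_add_pred (fun _ => 1)
      (by simp [hB, Matrix.vandermonde]) (by simp [hB, Matrix.vandermonde])
  have hblock : B.submatrix (Fin.succAbove 0) Fin.succ = -chordMatrix (mom n) T := by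
    ext i j
    simp [hB, chordMatrix, mom]
  have hdet : B.det = (-chordMatrix (mom n) T).det := by
    rw [Matrix.det_succ_column_zero, Fin.sum_univ_succ, hblock]
    simp [hB]
  calc |(chordMatrix (mom n) T).det| = |(Matrix.vandermonde T).det| := by
        rw [hrows, hdet, Matrix.det_neg]
        simp [abs_mul]
    _ = ∏ i, ∏ j ∈ Finset.Ioi i, |T j - T i| := by
        simp only [Matrix.det_vandermonde, Finset.abs_prod]

lemma volume_setOf_add_vecMul_mem {ι : Type*} [Fintype ι] [DecidableEq ι] {A : Matrix ι ι ℝ}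
    (hA : A.det ≠ 0) (y : ι → ℝ) (G : Set (ι → ℝ)) :
    volume {s : ι → ℝ | y + Matrix.vecMul s A ∈ G} = ENNReal.ofReal |A.det⁻¹| * volume G := by
  have hdet : LinearMap.det (Matrix.toLin' A.transpose) = A.det := by
    rw [LinearMap.det_toLin', Matrix.det_transpose]
  have hset : {s : ι → ℝ | y + Matrix.vecMul s A ∈ G} =
      Matrix.toLin' A.transpose ⁻¹' ((y + ·) ⁻¹' G) := by
    ext s
    simp [Matrix.mulVec_transpose]
  rw [hset, Measure.addHaar_preimage_linearMap _ (hdet ▸ hA), measure_preimage_add, hdet]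

lemma volume_pi_prod_eq_lintegral {ι α β : Type*} [Fintype ι] [MeasureSpace α] [MeasureSpace β]
    [SigmaFinite (volume : Measure α)] [SigmaFinite (volume : Measure β)] {S : Set (ι → α × β)}
    (hS : MeasurableSet S) :
    volume S = ∫⁻ t : ι → β, volume {s : ι → α | (fun i => (s i, t i)) ∈ S} := by
  have hvp := (volume_measurePreserving_arrowProdEquivProdArrow α β ι).symm
  rw [← hvp.measure_preimage hS.nullMeasurableSet, Measure.volume_eq_prod,
    Measure.prod_apply_symm (hvp.measurable hS)]
  rfl

lemma volume_setOf_mem_chains_le {F : Set (Pt n)} {δ : ℝ} (hδ : 0 < δ) (z : Pt n) (t : Fin n → ℝ) :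
    volume {s : Fin n → ℝ | (fun i => (s i, t i)) ∈ chains (mom n) F δ z n} ≤
      sliceVol n F ((Fin.cons z.1 t : Fin (n + 1) → ℝ) (Fin.last n)) *
        ∏ i : Fin (n + 1), ∏ j ∈ Finset.Ioi i, truncInv δ
          ((Fin.cons z.1 t : Fin (n + 1) → ℝ) j - (Fin.cons z.1 t : Fin (n + 1) → ℝ) i) := by
  set T : Fin (n + 1) → ℝ := Fin.cons z.1 t
  by_cases hsep : Pairwise fun i j => δ ≤ |T i - T j|
  · have hfar : ∀ i, ∀ j ∈ Finset.Ioi i, δ ≤ |T j - T i| :=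
      fun i j hj => hsep (Finset.mem_Ioi.1 hj).ne'
    have hdet : ENNReal.ofReal |(chordMatrix (mom n) T).det⁻¹| =
        ∏ i, ∏ j ∈ Finset.Ioi i, truncInv δ (T j - T i) := by
      rw [abs_inv, abs_det_chordMatrix_mom, ← Finset.prod_inv_distrib,
        ENNReal.ofReal_prod_of_nonneg fun i _ => by positivity]
      refine Finset.prod_congr rfl fun i _ => ?_
      rw [← Finset.prod_inv_distrib, ENNReal.ofReal_prod_of_nonneg fun j _ => by positivity]
      exact Finset.prod_congr rfl fun j hj => (if_pos (hfar i j hj)).symm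
    have hne : (chordMatrix (mom n) T).det ≠ 0 := by
      rw [← abs_pos, abs_det_chordMatrix_mom]
      exact Finset.prod_pos fun i _ => Finset.prod_pos fun j hj => hδ.trans_le (hfar i j hj)
    rw [← hdet, mul_comm, sliceVol, ← volume_setOf_add_vecMul_mem hne z.2]
    refine measure_mono fun s hs => ?_
    rw [mem_ofPred_eq, Matrix.vecMul_eq_sum]
    exact hs.1
  · rw [show {s : Fin n → ℝ | (fun i => (s i, t i)) ∈ chains (mom n) F δ z n} = ∅ from
      eq_empty_of_forall_notMem fun s hs => hsep hs.2, measure_empty]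
    exact zero_le

lemma measurable_mom (n : ℕ) : Measurable (mom n) := by
  unfold mom
  fun_prop

lemma volume_chains_mom_le (hn : n ≠ 0) {F : Set (Pt n)} (hF : MeasurableSet F) {M : ℝ≥0∞}
    (hM : ∀ᵐ t, sliceVol n F t ≤ M) {δ : ℝ} (hδ : 0 < δ) (z : Pt n) :
    volume (chains (mom n) F δ z n) ≤
      M * (∫⁻ τ, truncInv δ τ ^ ((n + 1) / 2 : ℝ)) ^ n := by
  have hlast : ∀ᵐ t : Fin n → ℝ,
      sliceVol n F ((Fin.cons z.1 t : Fin (n + 1) → ℝ) (Fin.last n)) ≤ M := by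
    obtain ⟨m, rfl⟩ := Nat.exists_eq_succ_of_ne_zero hn
    exact (Measure.tendsto_eval_ae_ae (μ := fun _ => (volume : Measure ℝ))
      (i := Fin.last m)).eventually hM
  have hmeas : Measurable fun t : Fin n → ℝ => ∏ i : Fin (n + 1), ∏ j ∈ Finset.Ioi i, truncInv δ
      ((Fin.cons z.1 t : Fin (n + 1) → ℝ) j - (Fin.cons z.1 t : Fin (n + 1) → ℝ) i) := by
    have h₁ := measurable_fin_cons (n := n) z.1
    have h₂ := measurable_truncInv δ
    fun_prop
  rw [volume_pi_prod_eq_lintegral (measurableSet_chains (measurable_mom n) hF z)]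
  refine (lintegral_mono_ae (hlast.mono fun t ht =>
    (volume_setOf_mem_chains_le hδ z t).trans (mul_le_mul_left ht _))).trans ?_
  rw [lintegral_const_mul _ hmeas]
  gcongr
  exact lintegral_prod_Ioi_le (measurable_truncInv δ) (truncInv_neg δ) n z.1

end ChangeOfVariables

section Endpoint

variable {n : ℕ} {γ : ℝ → Fin n → ℝ} {E F : Set (Pt n)}

lemma le_mul_rpow_of_pow_le (hn : n ≠ 0) {X e f c M : ℝ} (hX : 0 < X) (he : 0 < e) (hf : 0 < f)
    (hc : 0 ≤ c) (hM : 0 ≤ M)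
    (h : (X / (4 * f) * (X / (8 * e))) ^ n ≤
      M * (c * (X / (16 * n * e)) ^ (-(((n : ℝ) - 1) / 2))) ^ n) :
    X ≤ (32 * c * (16 * n) ^ (((n : ℝ) - 1) / 2)) ^ (2 / (n + 3) : ℝ) *
      (M ^ (2 / (n * (n + 3)) : ℝ) * f ^ (2 / (n + 3) : ℝ) * e ^ ((n + 1) / (n + 3) : ℝ)) := by
  have : (0 : ℝ) < n := Nat.cast_pos.2 (Nat.pos_of_ne_zero hn)
  set q : ℝ := ((n : ℝ) - 1) / 2 with hq
  have hroot : X / (4 * f) * (X / (8 * e)) ≤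
      M ^ (n⁻¹ : ℝ) * (c * (X / (16 * n * e)) ^ (-q)) := by
    refine (pow_le_pow_iff_left₀ (by positivity) (by positivity) hn).1 (h.trans_eq ?_)
    rw [mul_pow (M ^ _), Real.rpow_inv_natCast_pow hM hn]
  have hpow : X ^ ((n + 3) / 2 : ℝ) ≤
      32 * c * (16 * n) ^ q * (M ^ (n⁻¹ : ℝ) * f * e ^ ((n + 1) / 2 : ℝ)) :=
    calc X ^ ((n + 3) / 2 : ℝ)
        = X / (4 * f) * (X / (8 * e)) * (32 * f * e * X ^ q) := by
          rw [show ((n + 3) / 2 : ℝ) = 2 + q by rw [hq]; ring, Real.rpow_add hX, Real.rpow_two]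
          field_simp
          ring
      _ ≤ M ^ (n⁻¹ : ℝ) * (c * (X / (16 * n * e)) ^ (-q)) * (32 * f * e * X ^ q) := by gcongr
      _ = 32 * c * (16 * n) ^ q * (M ^ (n⁻¹ : ℝ) * f * e ^ ((n + 1) / 2 : ℝ)) := by
          rw [show ((n + 1) / 2 : ℝ) = 1 + q by rw [hq]; ring, Real.rpow_add he, Real.rpow_one,
            Real.rpow_neg (by positivity), Real.div_rpow hX.le (by positivity),
            Real.mul_rpow (by positivity) he.le]
          field_simp
  have hroot_const : 0 ≤ 32 * c * (16 * n) ^ q := by positivity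
  calc X = (X ^ ((n + 3) / 2 : ℝ)) ^ (2 / (n + 3) : ℝ) := by
        rw [← Real.rpow_mul hX.le, show ((n + 3) / 2 * (2 / (n + 3)) : ℝ) = 1 by field_simp,
          Real.rpow_one]
    _ ≤ (32 * c * (16 * n) ^ q * (M ^ (n⁻¹ : ℝ) * f * e ^ ((n + 1) / 2 : ℝ))) ^
          (2 / (n + 3) : ℝ) := by gcongr
    _ = _ := by
        rw [Real.mul_rpow hroot_const (by positivity),
          Real.mul_rpow (x := M ^ (n⁻¹ : ℝ) * f) (by positivity) (by positivity),
          Real.mul_rpow (by positivity) hf.le, ← Real.rpow_mul hM, ← Real.rpow_mul he.le,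
          show ((n : ℝ)⁻¹ * (2 / (n + 3))) = 2 / (n * (n + 3)) by field_simp,
          show ((n + 1) / 2 * (2 / (n + 3)) : ℝ) = (n + 1) / (n + 3) by field_simp]

lemma incidence_eq_zero_of_left_null (hγ : Measurable γ) (hE : MeasurableSet E)
    (hF : MeasurableSet F) (h : volume E = 0) : incidence γ E F = 0 := by
  rw [incidence_eq_lintegral_curveFiber hγ hE hF, setLIntegral_measure_zero _ _ h]

lemma incidence_eq_zero_of_right_null (h : volume F = 0) : incidence γ E F = 0 :=
  setLIntegral_measure_zero _ _ h

lemma pow_le_of_lt_incidence_mom (hn : 2 ≤ n) (hE : MeasurableSet E) (hF : MeasurableSet F)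
    {X e f : ℝ} (hX : 0 < X) (he : 0 < e) (hf : 0 < f) (hEe : volume E = ENNReal.ofReal e)
    (hFf : volume F = ENNReal.ofReal f) {M : NNReal} (hM : ∀ᵐ t, sliceVol n F t ≤ M)
    (h : ENNReal.ofReal X < incidence (mom n) E F) :
    (X / (4 * f) * (X / (8 * e))) ^ n ≤
      M * (2 / ((n + 1) / 2 - 1) * (X / (16 * n * e)) ^ (-(((n : ℝ) - 1) / 2))) ^ n := by
  have hn₀ : n ≠ 0 := by omega
  have hn₁ : (1 : ℝ) < n := by exact_mod_cast hn
  have hconst : (0 : ℝ) < 2 / ((n + 1) / 2 - 1) := div_pos two_pos (by linarith)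
  set a := ENNReal.ofReal (X / (4 * f)) with ha
  set b := ENNReal.ofReal (X / (4 * e)) with hb
  set δ : ℝ := X / (16 * n * e) with hδ_def
  have hδ : 0 < δ := by positivity
  have hb_half : b / 2 = ENNReal.ofReal (X / (8 * e)) := by
    rw [hb, ← ENNReal.ofReal_ofNat 2, ← ENNReal.ofReal_div_of_pos two_pos]
    congr 1
    ring
  have hsmall : b * volume E + a * volume F < incidence (mom n) E F := by
    refine h.trans_le' ?_
    rw [hEe, hFf, ha, hb, ← ENNReal.ofReal_mul (by positivity),
      ← ENNReal.ofReal_mul (by positivity), ← ENNReal.ofReal_add (by positivity) (by positivity)]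
    refine ENNReal.ofReal_le_ofReal ?_
    field_simp
    norm_num
  have hsep : n * ENNReal.ofReal (2 * δ) ≤ b / 2 := by
    rw [hb_half, ← ENNReal.ofReal_natCast, ← ENNReal.ofReal_mul (by positivity), hδ_def]
    refine ENNReal.ofReal_le_ofReal (le_of_eq ?_)
    field_simp
    norm_num
  obtain ⟨z, -, hz⟩ := exists_pow_le_volume_chains (b := b) (measurable_mom n)
    ENNReal.ofReal_ne_top hsep hE hF hsmall
  have hchain : (a * (b / 2)) ^ n ≤
      M * ENNReal.ofReal (2 / ((n + 1) / 2 - 1) * δ ^ (1 - (n + 1) / 2 : ℝ)) ^ n :=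
    hz.trans <| (volume_chains_mom_le hn₀ hF hM hδ z).trans <| by
      gcongr
      exact lintegral_truncInv_rpow_le hδ (by linarith)
  rwa [hb_half, ha, ← ENNReal.ofReal_mul (by positivity), ← ENNReal.ofReal_pow (by positivity),
    ← ENNReal.ofReal_pow (by positivity), ← ENNReal.ofReal_coe_nnreal,
    ← ENNReal.ofReal_mul M.coe_nonneg, ENNReal.ofReal_le_ofReal_iff (by positivity),
    show (1 - (n + 1) / 2 : ℝ) = -((n - 1) / 2) by ring] at hchain

theorem exists_incidence_mom_le (hn : 2 ≤ n) :
    ∃ K : ℝ, 0 < K ∧ ∀ E F : Set (Pt n), MeasurableSet E → MeasurableSet F →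
      volume E ≠ ∞ → volume F ≠ ∞ → ∀ M : ℝ≥0∞, M ≠ ∞ → (∀ᵐ t, sliceVol n F t ≤ M) →
        incidence (mom n) E F ≤ ENNReal.ofReal K * (M ^ (2 / (n * (n + 3)) : ℝ) *
          volume F ^ (2 / (n + 3) : ℝ) * volume E ^ ((n + 1) / (n + 3) : ℝ)) := by
  have hn₁ : (1 : ℝ) < n := by exact_mod_cast hn
  set c : ℝ := 2 / ((n + 1) / 2 - 1)
  have hc : 0 < c := div_pos two_pos (by linarith)
  refine ⟨(32 * c * (16 * n) ^ (((n : ℝ) - 1) / 2)) ^ (2 / (n + 3) : ℝ), by positivity, ?_⟩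
  intro E F hE hF hE_fin hF_fin M hM_fin hM
  lift M to NNReal using hM_fin
  refine ENNReal.le_of_forall_nnreal_lt fun X hX => ?_
  rcases eq_or_ne X 0 with rfl | hX₀
  · simp
  replace hX₀ : (0 : ℝ) < X := by positivity
  have hne : incidence (mom n) E F ≠ 0 := (zero_le.trans_lt hX).ne'
  have he : 0 < (volume E).toReal := ENNReal.toReal_pos
    (fun h => hne (incidence_eq_zero_of_left_null (measurable_mom n) hE hF h)) hE_fin
  have hf : 0 < (volume F).toReal := ENNReal.toReal_pos
    (fun h => hne (incidence_eq_zero_of_right_null h)) hF_fin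
  have hEe := (ENNReal.ofReal_toReal hE_fin).symm
  have hFf := (ENNReal.ofReal_toReal hF_fin).symm
  rw [← ENNReal.ofReal_coe_nnreal] at hX
  have hreal := le_mul_rpow_of_pow_le (by omega) hX₀ he hf hc.le M.coe_nonneg
    (pow_le_of_lt_incidence_mom hn hE hF hX₀ he hf hEe hFf hM hX)
  rw [hEe, hFf, ENNReal.ofReal_rpow_of_pos he, ENNReal.ofReal_rpow_of_pos hf,
    ← ENNReal.ofReal_coe_nnreal, ← ENNReal.ofReal_coe_nnreal,
    ENNReal.ofReal_rpow_of_nonneg M.coe_nonneg (by positivity),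
    ← ENNReal.ofReal_mul (by positivity), ← ENNReal.ofReal_mul (by positivity),
    ← ENNReal.ofReal_mul (by positivity)]
  exact ENNReal.ofReal_le_ofReal hreal

end Endpoint

section Slices

variable {n : ℕ} {E F : Set (Pt n)} {c : ℝ≥0∞}

/-- Almost every nonempty slice of `F` has measure in `[c, 4c]`; this is the hypothesis
`A/2 ≤ |F_t| ≤ 2A` with `c = A/2`, where the set `T` is replaced by the support of the slice
function. -/
def UniformSlices (n : ℕ) (F : Set (Pt n)) (c : ℝ≥0∞) : Prop :=
  ∀ᵐ t, t ∈ Function.support (sliceVol n F) → c ≤ sliceVol n F t ∧ sliceVol n F t ≤ 4 * c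

lemma measurable_sliceVol (hF : MeasurableSet F) : Measurable (sliceVol n F) :=
  measurable_measure_prodMk_left hF

lemma volume_eq_setLIntegral_support_sliceVol (hF : MeasurableSet F) :
    volume F = ∫⁻ t in Function.support (sliceVol n F), sliceVol n F t := by
  rw [setLIntegral_eq_of_support_subset subset_rfl, Measure.volume_eq_prod, Measure.prod_apply hF]
  rfl

lemma UniformSlices.of_ae {A : ℝ} {T : Set ℝ}
    (hT : ∀ᵐ t, t ∈ T → ENNReal.ofReal (A / 2) ≤ sliceVol n F t ∧
      sliceVol n F t ≤ ENNReal.ofReal (2 * A))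
    (hTc : ∀ᵐ t, t ∉ T → sliceVol n F t = 0) : UniformSlices n F (ENNReal.ofReal (A / 2)) := by
  have h4 : 4 * ENNReal.ofReal (A / 2) = ENNReal.ofReal (2 * A) := by
    rw [← ENNReal.ofReal_ofNat 4, ← ENNReal.ofReal_mul (by norm_num)]
    congr 1
    ring
  filter_upwards [hT, hTc] with t ht htc hsupp
  rw [h4]
  exact ht (not_imp_comm.1 htc hsupp)

lemma UniformSlices.sliceVol_le (h : UniformSlices n F c) : ∀ᵐ t, sliceVol n F t ≤ 4 * c := by
  filter_upwards [h] with t ht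
  by_cases hsupp : sliceVol n F t = 0
  · exact hsupp.trans_le zero_le
  · exact (ht hsupp).2

lemma UniformSlices.mul_volume_support_le (h : UniformSlices n F c) (hF : MeasurableSet F) :
    c * volume (Function.support (sliceVol n F)) ≤ volume F := by
  rw [volume_eq_setLIntegral_support_sliceVol hF, ← setLIntegral_const]
  exact setLIntegral_mono_ae (measurable_sliceVol hF).aemeasurable
    (h.mono fun t ht hsupp => (ht hsupp).1)

lemma UniformSlices.volume_le (h : UniformSlices n F c) (hF : MeasurableSet F) :
    volume F ≤ 4 * c * volume (Function.support (sliceVol n F)) := by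
  rw [volume_eq_setLIntegral_support_sliceVol hF, ← setLIntegral_const]
  exact setLIntegral_mono_ae aemeasurable_const (h.mono fun t ht hsupp => (ht hsupp).2)

lemma UniformSlices.volume_support_ne_zero (h : UniformSlices n F c) (hF : MeasurableSet F)
    (hF₀ : volume F ≠ 0) : volume (Function.support (sliceVol n F)) ≠ 0 := fun hw =>
  hF₀ (nonpos_iff_eq_zero.1 ((h.volume_le hF).trans_eq (by rw [hw, mul_zero])))

lemma UniformSlices.volume_support_ne_top (h : UniformSlices n F c) (hF : MeasurableSet F)
    (hc : c ≠ 0) (hF_fin : volume F ≠ ∞) : volume (Function.support (sliceVol n F)) ≠ ∞ := fun hw =>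
  hF_fin (top_le_iff.1 ((h.mul_volume_support_le hF).trans_eq' (by rw [hw, ENNReal.mul_top hc])))

lemma mixedNormR_ind (hF : MeasurableSet F) {q r : ℝ} (hr : 0 < r) :
    mixedNormR n q r (ind n F) = (∫⁻ t, sliceVol n F t ^ (q / r)) ^ (1 / q) := by
  have hinner (t : ℝ) : ∫⁻ y, ENNReal.ofReal |ind n F (t, y)| ^ r = sliceVol n F t := by
    have ht : MeasurableSet {y : Fin n → ℝ | (t, y) ∈ F} := measurable_prodMk_left hF
    rw [sliceVol, ← lintegral_indicator_one ht]
    refine lintegral_congr fun y => ?_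
    by_cases hy : (t, y) ∈ F <;> simp [ind, hy, hr]
  simp only [mixedNormR, mixedNorm, mixedNormG, hinner]

lemma UniformSlices.le_mixedNormR_ind (h : UniformSlices n F c) (hF : MeasurableSet F) {q r : ℝ}
    (hq : 0 < q) (hr : 0 < r) :
    c ^ (1 / r) * volume (Function.support (sliceVol n F)) ^ (1 / q) ≤
      mixedNormR n q r (ind n F) := by
  set S := Function.support (sliceVol n F)
  calc c ^ (1 / r) * volume S ^ (1 / q)
      = (c ^ (q / r) * volume S) ^ (1 / q) := by
        rw [ENNReal.mul_rpow_of_nonneg _ _ (by positivity), ← ENNReal.rpow_mul,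
          show q / r * (1 / q) = 1 / r by field_simp]
    _ ≤ (∫⁻ t in S, sliceVol n F t ^ (q / r)) ^ (1 / q) := by
        rw [← setLIntegral_const]
        gcongr ?_ ^ _
        refine setLIntegral_mono_ae ((measurable_sliceVol hF).pow_const _).aemeasurable ?_
        filter_upwards [h] with t ht hsupp
        gcongr
        exact (ht hsupp).1
    _ ≤ (∫⁻ t, sliceVol n F t ^ (q / r)) ^ (1 / q) := by
        gcongr
        exact Measure.restrict_le_self
    _ = mixedNormR n q r (ind n F) := (mixedNormR_ind hF hr).symm

lemma Xray_ind (hE : MeasurableSet E) (z : Pt n) :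
    Xray n (ind n E) z = volume (lineFiber (mom n) E z) := by
  rw [Xray, ← lintegral_indicator_one (measurableSet_lineFiber (measurable_mom n) hE z)]
  refine lintegral_congr fun s => ?_
  by_cases hs : (s, z.2 + s • mom n z.1) ∈ E <;> simp [ind, lineFiber, hs]

lemma pairSet_eq_incidence (hE : MeasurableSet E) (hF : MeasurableSet F) :
    pairSet n E F = incidence (mom n) E F := by
  rw [pairSet, pairing, incidence, ← lintegral_indicator hF]
  refine lintegral_congr fun z => ?_
  rw [Xray_ind hE]
  by_cases hz : z ∈ F <;> simp [ind, hz]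

end Slices

section Exponents

variable {d : ℕ} {θ : ℝ}

lemma one_div_dualExp_inv {x : ℝ} (hx : x ≠ 0) : 1 / dualExp x⁻¹ = 1 - x := by
  rw [dualExp]
  field_simp

lemma dualExp_inv_pos {x : ℝ} (hx₀ : 0 < x) (hx₁ : x < 1) : 0 < dualExp x⁻¹ :=
  div_pos (inv_pos.2 hx₀) (sub_pos.2 ((one_lt_inv₀ hx₀).2 hx₁))

lemma one_div_pExp (d : ℕ) (θ : ℝ) : 1 / pExp d θ = 1 - θ + θ * (d / (d + 2)) := by
  rw [pExp, one_div, inv_inv, mul_div_assoc]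

lemma one_div_dualExp_qExp (hd : d ≠ 0) (hθ : θ ≠ 0) :
    1 / dualExp (qExp d θ) = 1 - θ * (d / (d + 2)) := by
  rw [qExp, one_div_dualExp_inv, mul_div_assoc]
  positivity

lemma dualExp_qExp_pos (hd : d ≠ 0) (hθ : θ ∈ Ioo (0 : ℝ) 1) : 0 < dualExp (qExp d θ) := by
  have : (0 : ℝ) < d := by positivity
  have hθ₀ := hθ.1
  refine dualExp_inv_pos (by positivity) ?_
  rw [div_lt_one (by positivity)]
  nlinarith [hθ.2]

lemma inv_rExp (hd : 2 ≤ d) (θ : ℝ) :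
    (rExp d θ)⁻¹ = 1 - θ * (2 * d / ((d - 1) * (d + 2))) := by
  have hd₁ : (0 : ℝ) < d - 1 := sub_pos.2 (by exact_mod_cast hd)
  rw [rExp, inv_inv, show (d : ℝ) ^ 2 + d - 2 = (d - 1) * (d + 2) by ring]
  field_simp
  ring

lemma inv_rExp_mem_Ioo (hd : 3 ≤ d) (hθ : θ ∈ Ioo (0 : ℝ) 1) : (rExp d θ)⁻¹ ∈ Ioo (0 : ℝ) 1 := by
  have hd₃ : (3 : ℝ) ≤ d := by exact_mod_cast hd
  have hd₁ : (0 : ℝ) < d - 1 := by linarith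
  have hθ₀ := hθ.1
  have hratio : 2 * d / ((d - 1) * (d + 2)) ≤ (1 : ℝ) := by
    rw [div_le_one (by positivity)]
    nlinarith
  have hratio_pos : (0 : ℝ) < 2 * d / ((d - 1) * (d + 2)) := by positivity
  rw [inv_rExp (by omega)]
  constructor
  · nlinarith [hθ.2]
  · nlinarith

lemma one_div_dualExp_rExp (hd : 3 ≤ d) (hθ : θ ∈ Ioo (0 : ℝ) 1) :
    1 / dualExp (rExp d θ) = θ * (2 * d / ((d - 1) * (d + 2))) := by
  rw [← inv_inv (rExp d θ), one_div_dualExp_inv (inv_rExp_mem_Ioo hd hθ).1.ne',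
    inv_rExp (by omega)]
  ring

lemma dualExp_rExp_pos (hd : 3 ≤ d) (hθ : θ ∈ Ioo (0 : ℝ) 1) : 0 < dualExp (rExp d θ) := by
  rw [← inv_inv (rExp d θ)]
  exact dualExp_inv_pos (inv_rExp_mem_Ioo hd hθ).1 (inv_rExp_mem_Ioo hd hθ).2

lemma theta0_mem_Ioo (hd : 2 ≤ d) : theta0 d ∈ Ioo (0 : ℝ) 1 := by
  have hd₂ : (2 : ℝ) ≤ d := by exact_mod_cast hd
  refine ⟨div_pos (by nlinarith) (by positivity), ?_⟩
  rw [theta0, div_lt_one (by positivity)]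
  linarith

lemma one_sub_theta0_mul (hd : 2 ≤ d) :
    1 - theta0 d * (d / (d + 2)) = theta0 d * (2 * d / ((d - 1) * (d + 2))) := by
  have hd₁ : (0 : ℝ) < d - 1 := sub_pos.2 (by exact_mod_cast hd)
  rw [theta0, show (d : ℝ) ^ 2 + d - 2 = (d - 1) * (d + 2) by ring]
  field_simp
  ring

end Exponents

section Interpolation

lemma le_rpow_mul_of_rpow_mul_rpow_le {θ : ℝ} (hθ : 0 < θ) {a b κ : ℝ≥0∞} (ha₀ : a ≠ 0)
    (ha : a ≠ ∞) (h : a ^ (1 - θ) * b ^ θ ≤ κ * a) : b ≤ κ ^ (1 / θ) * a := by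
  have hcancel : b ^ θ ≤ κ * a ^ θ := by
    refine (ENNReal.mul_le_mul_iff_right (a := a ^ (1 - θ)) ?_ ?_).1 (h.trans_eq ?_)
    · exact (ENNReal.rpow_pos (pos_iff_ne_zero.2 ha₀) ha).ne'
    · exact ENNReal.rpow_ne_top_of_ne_zero ha₀ ha
    · rw [mul_left_comm, ← ENNReal.rpow_add _ _ ha₀ ha, sub_add_cancel, ENNReal.rpow_one]
  refine (ENNReal.rpow_le_rpow_iff hθ).1 (hcancel.trans_eq ?_)
  rw [ENNReal.mul_rpow_of_nonneg _ _ hθ.le, ← ENNReal.rpow_mul, one_div_mul_cancel hθ.ne',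
    ENNReal.rpow_one]

lemma rpow_mul_rpow_le_of_le {θ θ' : ℝ} (hθ : 0 ≤ θ) (hθθ' : θ ≤ θ') (hθ' : θ' ≤ 1)
    {a b P : ℝ≥0∞} (hP : 1 ≤ P) (h : b ≤ P * a) :
    a ^ (1 - θ') * b ^ θ' ≤ P * (a ^ (1 - θ) * b ^ θ) := by
  have hdiff : 0 ≤ θ' - θ := sub_nonneg.2 hθθ'
  calc a ^ (1 - θ') * b ^ θ'
      = a ^ (1 - θ') * (b ^ (θ' - θ) * b ^ θ) := by
        rw [← ENNReal.rpow_add_of_nonneg _ _ hdiff hθ, sub_add_cancel]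
    _ ≤ a ^ (1 - θ') * ((P * a) ^ (θ' - θ) * b ^ θ) := by gcongr
    _ = P ^ (θ' - θ) * (a ^ (1 - θ') * a ^ (θ' - θ) * b ^ θ) := by
        rw [ENNReal.mul_rpow_of_nonneg _ _ hdiff]
        ring
    _ ≤ P * (a ^ (1 - θ) * b ^ θ) := by
        rw [← ENNReal.rpow_add_of_nonneg _ _ (sub_nonneg.2 hθ') hdiff,
          sub_add_sub_cancel]
        gcongr
        exact (ENNReal.rpow_le_rpow_of_exponent_le hP (by linarith)).trans_eq (ENNReal.rpow_one P)

lemma rpow_mul_rpow_le_mul {θ θ' : ℝ} (hθ : θ ∈ Icc (0 : ℝ) 1) (hθ' : θ' ∈ Icc (0 : ℝ) 1)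
    {a b P : ℝ≥0∞} (hP : 1 ≤ P) (hab : a ≤ P * b) (hba : b ≤ P * a) :
    a ^ (1 - θ') * b ^ θ' ≤ P * (a ^ (1 - θ) * b ^ θ) := by
  rcases le_total θ θ' with h | h
  · exact rpow_mul_rpow_le_of_le hθ.1 h hθ'.2 hP hba
  · rw [mul_comm, mul_comm (a ^ (1 - θ))]
    simpa only [_root_.sub_sub_cancel] using
      rpow_mul_rpow_le_of_le (sub_nonneg.2 hθ.2) (sub_le_sub_left h 1)
        (sub_le_self 1 hθ'.1) hP hab

-- The hypotheses bound `b / a` by `κ ^ (1 / θ)` and `a / b` by `κ ^ (1 / (1 - θ))`, and once `a`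
-- and `b` are comparable, so are all their weighted geometric means.
lemma rpow_mul_rpow_le_rpow_mul {θ θ' : ℝ} (hθ : θ ∈ Ioo (0 : ℝ) 1) (hθ' : θ' ∈ Icc (0 : ℝ) 1)
    {a b κ : ℝ≥0∞} (ha₀ : a ≠ 0) (ha : a ≠ ∞) (hb₀ : b ≠ 0) (hb : b ≠ ∞) (hκ : 1 ≤ κ)
    (hκa : a ^ (1 - θ) * b ^ θ ≤ κ * a) (hκb : a ^ (1 - θ) * b ^ θ ≤ κ * b) :
    a ^ (1 - θ') * b ^ θ' ≤ κ ^ (1 / θ + 1 / (1 - θ)) * (a ^ (1 - θ) * b ^ θ) := by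
  have hθ₀ : 0 < θ := hθ.1
  have hθ₁ : 0 < 1 - θ := sub_pos.2 hθ.2
  have hba : b ≤ κ ^ (1 / θ + 1 / (1 - θ)) * a := by
    refine (le_rpow_mul_of_rpow_mul_rpow_le hθ₀ ha₀ ha hκa).trans ?_
    gcongr
    exact le_add_of_nonneg_right (by positivity)
  have hab : a ≤ κ ^ (1 / θ + 1 / (1 - θ)) * b := by
    rw [mul_comm, ← _root_.sub_sub_cancel 1 θ, _root_.sub_sub_cancel 1 (1 - θ)] at hκb
    refine (le_rpow_mul_of_rpow_mul_rpow_le hθ₁ hb₀ hb hκb).trans ?_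
    gcongr
    exact le_add_of_nonneg_left (by positivity)
  exact rpow_mul_rpow_le_mul (Ioo_subset_Icc_self hθ) hθ'
    (ENNReal.one_le_rpow hκ (by positivity)) hab hba

theorem exists_rpow_mul_rpow_le_of_quasiextremal {θ θ' : ℝ} (hθ : θ ∈ Ioo (0 : ℝ) 1)
    (hθ' : θ' ∈ Icc (0 : ℝ) 1) (K L : ℝ) :
    ∃ C : ℝ, 1 ≤ C ∧ ∀ a b X : ℝ≥0∞, a ≠ 0 → a ≠ ∞ → b ≠ 0 → b ≠ ∞ →
      ∀ ε ∈ Ioc (0 : ℝ) 1, X ≤ a → X ≤ ENNReal.ofReal K * b →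
        ENNReal.ofReal ε * (a ^ (1 - θ) * b ^ θ) ≤ X →
          ENNReal.ofReal L * (a ^ (1 - θ') * b ^ θ') ≤
            ENNReal.ofReal (C * ε ^ (-C)) * (a ^ (1 - θ) * b ^ θ) := by
  set p := 1 / θ + 1 / (1 - θ)
  set K₁ := max K 1
  have hK₁ : 1 ≤ K₁ := le_max_right K 1
  set C := max 1 (max p (L * K₁ ^ p))
  refine ⟨C, le_max_left _ _, fun a b X ha₀ ha hb₀ hb ε hε hXa hXb hX => ?_⟩
  have hε₀ := hε.1
  set κ := ENNReal.ofReal (K₁ / ε) with hκ_def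
  have hκ : 1 ≤ κ := ENNReal.one_le_ofReal.2 ((one_le_div hε₀).2 (hε.2.trans hK₁))
  have hmean {u : ℝ≥0∞} (hu : X ≤ ENNReal.ofReal K₁ * u) : a ^ (1 - θ) * b ^ θ ≤ κ * u := by
    rw [hκ_def, ENNReal.ofReal_div_of_pos hε₀, div_eq_mul_inv, mul_right_comm, ← div_eq_mul_inv,
      ENNReal.le_div_iff_mul_le (by simp [hε₀]) (by simp), mul_comm]
    exact hX.trans hu
  have hmean_le : a ^ (1 - θ') * b ^ θ' ≤ κ ^ p * (a ^ (1 - θ) * b ^ θ) :=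
    rpow_mul_rpow_le_rpow_mul hθ hθ' ha₀ ha hb₀ hb hκ
      (hmean (hXa.trans (le_mul_of_one_le_left' (ENNReal.one_le_ofReal.2 hK₁))))
      (hmean (hXb.trans (by gcongr; exact le_max_left K 1)))
  have hconst : ENNReal.ofReal L * κ ^ p ≤ ENNReal.ofReal (C * ε ^ (-C)) := by
    rw [ENNReal.ofReal_rpow_of_pos (by positivity), ← ENNReal.ofReal_mul' (by positivity),
      Real.div_rpow (by positivity) hε₀.le, ← mul_div_assoc, div_eq_mul_inv, ← Real.rpow_neg hε₀.le]
    refine ENNReal.ofReal_le_ofReal (mul_le_mul ?_ ?_ (by positivity) (by positivity))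
    · exact (le_max_right _ _).trans (le_max_right _ _)
    · exact Real.rpow_le_rpow_of_exponent_ge hε₀ hε.2
        (neg_le_neg ((le_max_left _ _).trans (le_max_right _ _)))
  calc ENNReal.ofReal L * (a ^ (1 - θ') * b ^ θ')
      ≤ ENNReal.ofReal L * (κ ^ p * (a ^ (1 - θ) * b ^ θ)) := mul_le_mul_right hmean_le _
    _ ≤ ENNReal.ofReal (C * ε ^ (-C)) * (a ^ (1 - θ) * b ^ θ) := by
        rw [← mul_assoc]
        exact mul_le_mul_left hconst _

end Interpolation

section RestrictedBound

variable {d : ℕ} {θ : ℝ} {E F : Set (Pt (d - 1))} {c : ℝ≥0∞}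

/-- The quantity `e^(1/p_θ) · c^(1/r_θ') · w^(1/q_θ')`, which is `|E|^(1/p_θ) ‖1_F‖_{q_θ', r_θ'}`
when `|E| = e` and `F` has slices of measure `c` over a set of measure `w`. The exponents are
written out because `qExp d 0 = 0⁻¹ = 0` would give the wrong value at `θ = 0`. -/
def restrictedBound (d : ℕ) (θ : ℝ) (e c w : ℝ≥0∞) : ℝ≥0∞ :=
  e ^ (1 - θ + θ * (d / (d + 2))) *
    (c ^ (θ * (2 * d / ((d - 1) * (d + 2)))) * w ^ (1 - θ * (d / (d + 2))))

lemma restrictedBound_zero (d : ℕ) (e c w : ℝ≥0∞) : restrictedBound d 0 e c w = w * e := by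
  simp [restrictedBound, mul_comm]

lemma restrictedBound_ne_zero (d : ℕ) (θ : ℝ) {e c w : ℝ≥0∞} (he₀ : e ≠ 0) (he : e ≠ ∞)
    (hc₀ : c ≠ 0) (hc : c ≠ ∞) (hw₀ : w ≠ 0) (hw : w ≠ ∞) : restrictedBound d θ e c w ≠ 0 := by
  have hpos {u : ℝ≥0∞} (hu₀ : u ≠ 0) (hu : u ≠ ∞) (x : ℝ) : u ^ x ≠ 0 :=
    (ENNReal.rpow_pos (pos_iff_ne_zero.2 hu₀) hu).ne'
  exact mul_ne_zero (hpos he₀ he _) (mul_ne_zero (hpos hc₀ hc _) (hpos hw₀ hw _))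

lemma restrictedBound_ne_top (d : ℕ) (θ : ℝ) {e c w : ℝ≥0∞} (he₀ : e ≠ 0) (he : e ≠ ∞)
    (hc₀ : c ≠ 0) (hc : c ≠ ∞) (hw₀ : w ≠ 0) (hw : w ≠ ∞) : restrictedBound d θ e c w ≠ ∞ :=
  ENNReal.mul_ne_top (ENNReal.rpow_ne_top_of_ne_zero he₀ he)
    (ENNReal.mul_ne_top (ENNReal.rpow_ne_top_of_ne_zero hc₀ hc)
      (ENNReal.rpow_ne_top_of_ne_zero hw₀ hw))

lemma restrictedBound_eq_rpow_mul_rpow (d : ℕ) (hθ : θ ∈ Icc (0 : ℝ) 1) (e c w : ℝ≥0∞) :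
    restrictedBound d θ e c w =
      restrictedBound d 0 e c w ^ (1 - θ) * restrictedBound d 1 e c w ^ θ := by
  have hθ₀ := hθ.1
  have hθ₁ : 0 ≤ 1 - θ := sub_nonneg.2 hθ.2
  have hx₁ : 0 ≤ 1 - (d / (d + 2) : ℝ) :=
    sub_nonneg.2 (div_le_one_of_le₀ (by linarith) (by positivity))
  rw [restrictedBound_zero]
  simp only [restrictedBound, sub_self, zero_add, one_mul, ENNReal.mul_rpow_of_nonneg _ _ hθ₀,
    ENNReal.mul_rpow_of_nonneg _ _ hθ₁, ← ENNReal.rpow_mul]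
  rw [ENNReal.rpow_add_of_nonneg _ _ hθ₁ (by positivity),
    show 1 - θ * (d / (d + 2)) = 1 - θ + (1 - d / (d + 2)) * θ by ring,
    ENNReal.rpow_add_of_nonneg _ _ hθ₁ (by positivity)]
  ring_nf

lemma UniformSlices.restrictedBound_le_dualNorm (h : UniformSlices (d - 1) F c) (hd : 3 ≤ d)
    (hθ : θ ∈ Ioo (0 : ℝ) 1) (hF : MeasurableSet F) (e : ℝ≥0∞) :
    restrictedBound d θ e c (volume (Function.support (sliceVol (d - 1) F))) ≤
      e ^ (1 / pExp d θ) * dualNorm d θ (ind (d - 1) F) := by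
  rw [restrictedBound, ← one_div_pExp, ← one_div_dualExp_rExp hd hθ,
    ← one_div_dualExp_qExp (by omega) hθ.1.ne']
  gcongr
  exact h.le_mixedNormR_ind hF (dualExp_qExp_pos (by omega) hθ) (dualExp_rExp_pos hd hθ)

lemma UniformSlices.le_restrictedBound_theta0 (h : UniformSlices (d - 1) F c) (hd : 2 ≤ d)
    (hF : MeasurableSet F) (e : ℝ≥0∞) :
    e ^ (1 / pExp d (theta0 d)) * volume F ^ (1 / dualExp (qExp d (theta0 d))) ≤
      ENNReal.ofReal (4 ^ (1 / dualExp (qExp d (theta0 d)))) *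
        restrictedBound d (theta0 d) e c (volume (Function.support (sliceVol (d - 1) F))) := by
  have hexp := one_div_dualExp_qExp (d := d) (by omega) (theta0_mem_Ioo hd).1.ne'
  have hnonneg : 0 ≤ 1 / dualExp (qExp d (theta0 d)) :=
    (one_div_pos.2 (dualExp_qExp_pos (by omega) (theta0_mem_Ioo hd))).le
  rw [restrictedBound, ← one_sub_theta0_mul hd, ← hexp, ← one_div_pExp,
    ← ENNReal.mul_rpow_of_nonneg _ _ hnonneg, ← ENNReal.ofReal_rpow_of_pos four_pos,
    ENNReal.ofReal_ofNat, mul_left_comm, ← ENNReal.mul_rpow_of_nonneg _ _ hnonneg, ← mul_assoc]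
  gcongr
  exact h.volume_le hF

lemma UniformSlices.endpoint_le_restrictedBound_one (h : UniformSlices (d - 1) F c) (hd : 2 ≤ d)
    (hF : MeasurableSet F) (e : ℝ≥0∞) :
    (4 * c) ^ (2 / ((d - 1) * (d + 2)) : ℝ) * volume F ^ (2 / (d + 2) : ℝ) * e ^ (d / (d + 2) : ℝ) ≤
      4 ^ (2 * d / ((d - 1) * (d + 2)) : ℝ) *
        restrictedBound d 1 e c (volume (Function.support (sliceVol (d - 1) F))) := by
  have hd₁ : (0 : ℝ) < d - 1 := sub_pos.2 (by exact_mod_cast hd)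
  set w := volume (Function.support (sliceVol (d - 1) F))
  have hexp : (2 * d / ((d - 1) * (d + 2)) : ℝ) = 2 / ((d - 1) * (d + 2)) + 2 / (d + 2) := by
    field_simp
    ring
  have hexp' : (1 - d / (d + 2) : ℝ) = 2 / (d + 2) := by
    field_simp
    ring
  calc (4 * c) ^ (2 / ((d - 1) * (d + 2)) : ℝ) * volume F ^ (2 / (d + 2) : ℝ) *
        e ^ (d / (d + 2) : ℝ)
      ≤ (4 * c) ^ (2 / ((d - 1) * (d + 2)) : ℝ) * (4 * c * w) ^ (2 / (d + 2) : ℝ) *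
        e ^ (d / (d + 2) : ℝ) := by
        gcongr
        exact h.volume_le hF
    _ = (4 * c) ^ (2 * d / ((d - 1) * (d + 2)) : ℝ) * w ^ (1 - d / (d + 2) : ℝ) *
        e ^ (d / (d + 2) : ℝ) := by
        rw [ENNReal.mul_rpow_of_nonneg _ w (by positivity), ← mul_assoc,
          ← ENNReal.rpow_add_of_nonneg _ _ (by positivity) (by positivity), ← hexp, hexp']
    _ = 4 ^ (2 * d / ((d - 1) * (d + 2)) : ℝ) * restrictedBound d 1 e c w := by
        rw [ENNReal.mul_rpow_of_nonneg _ c (by positivity), restrictedBound, sub_self, zero_add,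
          one_mul, one_mul]
        ring

lemma incidence_le_restrictedBound_zero (hE : MeasurableSet E)
    (hF : MeasurableSet F) (c : ℝ≥0∞) :
    incidence (mom (d - 1)) E F ≤
      restrictedBound d 0 (volume E) c (volume (Function.support (sliceVol (d - 1) F))) :=
  (incidence_le_volume_support_mul (measurable_mom _) hE hF).trans_eq
    (restrictedBound_zero _ _ _ _).symm

theorem exists_incidence_le_restrictedBound_one (hd : 3 ≤ d) :
    ∃ K : ℝ, ∀ E F : Set (Pt (d - 1)), MeasurableSet E → MeasurableSet F →
      volume E ≠ ∞ → volume F ≠ ∞ → ∀ c : ℝ≥0∞, c ≠ ∞ → UniformSlices (d - 1) F c →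
        incidence (mom (d - 1)) E F ≤ ENNReal.ofReal K *
          restrictedBound d 1 (volume E) c (volume (Function.support (sliceVol (d - 1) F))) := by
  have hcast : ((d - 1 : ℕ) : ℝ) = d - 1 := by rw [Nat.cast_sub (by omega), Nat.cast_one]
  obtain ⟨K, hK, hincidence⟩ := exists_incidence_mom_le (n := d - 1) (by omega)
  simp only [hcast, sub_add_cancel, show (d - 1 + 3 : ℝ) = d + 2 by ring] at hincidence
  refine ⟨K * 4 ^ (2 * d / ((d - 1) * (d + 2)) : ℝ), fun E F hE hF hE_fin hF_fin c hc h => ?_⟩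
  refine (hincidence E F hE hF hE_fin hF_fin _ (ENNReal.mul_ne_top (by simp) hc)
    h.sliceVol_le).trans ?_
  rw [ENNReal.ofReal_mul hK.le, ← ENNReal.ofReal_rpow_of_pos four_pos, ENNReal.ofReal_ofNat,
    mul_assoc (ENNReal.ofReal K) (4 ^ _)]
  exact mul_le_mul_right (h.endpoint_le_restrictedBound_one (by omega) hF _) _

theorem exists_restrictedBound_le_of_quasiextremal {θ' : ℝ} (d : ℕ)
    (hθ : θ ∈ Ioo (0 : ℝ) 1) (hθ' : θ' ∈ Icc (0 : ℝ) 1) (K L : ℝ) :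
    ∃ C : ℝ, 1 ≤ C ∧ ∀ e c w X : ℝ≥0∞, e ≠ 0 → e ≠ ∞ → c ≠ 0 → c ≠ ∞ → w ≠ 0 → w ≠ ∞ →
      ∀ ε ∈ Ioc (0 : ℝ) 1, X ≤ restrictedBound d 0 e c w →
        X ≤ ENNReal.ofReal K * restrictedBound d 1 e c w →
          ENNReal.ofReal ε * restrictedBound d θ e c w ≤ X →
            ENNReal.ofReal L * restrictedBound d θ' e c w ≤
              ENNReal.ofReal (C * ε ^ (-C)) * restrictedBound d θ e c w := by
  obtain ⟨C, hC, h⟩ := exists_rpow_mul_rpow_le_of_quasiextremal hθ hθ' K L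
  refine ⟨C, hC, fun e c w X he₀ he hc₀ hc hw₀ hw => ?_⟩
  rw [restrictedBound_eq_rpow_mul_rpow d (Ioo_subset_Icc_self hθ),
    restrictedBound_eq_rpow_mul_rpow d hθ']
  exact h _ _ X (restrictedBound_ne_zero d 0 he₀ he hc₀ hc hw₀ hw)
    (restrictedBound_ne_top d 0 he₀ he hc₀ hc hw₀ hw)
    (restrictedBound_ne_zero d 1 he₀ he hc₀ hc hw₀ hw)
    (restrictedBound_ne_top d 1 he₀ he hc₀ hc hw₀ hw)

end RestrictedBound

/-- lower bound relating quasiextremal pairs at `θ` to the exponent `θ₀`. -/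
theorem quasiextremal_theta0_bound (d : ℕ) (hd : 3 ≤ d) (θ : ℝ)
    (hθ : θ ∈ Set.Ioo (0:ℝ) 1) :
    ∃ C : ℝ, 1 ≤ C ∧
      ∀ E F : Set (Pt (d-1)), MeasurableSet E → MeasurableSet F →
        0 < volume E → volume E < ⊤ → 0 < volume F → volume F < ⊤ →
        ∀ (A : ℝ) (T : Set ℝ), 0 < A →
          (∀ᵐ t : ℝ, t ∈ T → ENNReal.ofReal (A/2) ≤ sliceVol (d-1) F t ∧
              sliceVol (d-1) F t ≤ ENNReal.ofReal (2*A)) →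
          (∀ᵐ t : ℝ, t ∉ T → sliceVol (d-1) F t = 0) →
        ∀ ε : ℝ, ε ∈ Set.Ioc (0:ℝ) 1 →
          ENNReal.ofReal ε * volume E ^ (1 / pExp d θ) * dualNorm d θ (ind (d-1) F) ≤
            pairSet (d-1) E F →
          volume E ^ (1 / pExp d (theta0 d)) *
              volume F ^ (1 / dualExp (qExp d (theta0 d))) ≤
            ENNReal.ofReal (C * ε ^ (-C)) * volume E ^ (1 / pExp d θ) *
              dualNorm d θ (ind (d-1) F) := by
  set L : ℝ := 4 ^ (1 / dualExp (qExp d (theta0 d)))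
  obtain ⟨K, hK⟩ := exists_incidence_le_restrictedBound_one hd
  obtain ⟨C, hC, hinterp⟩ := exists_restrictedBound_le_of_quasiextremal d hθ
    (Ioo_subset_Icc_self (theta0_mem_Ioo (by omega : 2 ≤ d))) K L
  refine ⟨C, hC, fun E F hE hF hE₀ hE_fin hF₀ hF_fin A T hA hT hTc ε hε hquasi => ?_⟩
  set c := ENNReal.ofReal (A / 2)
  set w := volume (Function.support (sliceVol (d - 1) F))
  have hslices : UniformSlices (d - 1) F c := .of_ae hT hTc
  have hc₀ : c ≠ 0 := (ENNReal.ofReal_pos.2 (half_pos hA)).ne'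
  have hnorm := hslices.restrictedBound_le_dualNorm hd hθ hF (volume E)
  rw [mul_assoc, pairSet_eq_incidence hE hF] at hquasi
  rw [mul_assoc]
  calc volume E ^ (1 / pExp d (theta0 d)) * volume F ^ (1 / dualExp (qExp d (theta0 d)))
      ≤ ENNReal.ofReal L * restrictedBound d (theta0 d) (volume E) c w :=
        hslices.le_restrictedBound_theta0 (by omega) hF (volume E)
    _ ≤ ENNReal.ofReal (C * ε ^ (-C)) * restrictedBound d θ (volume E) c w :=
        hinterp _ c w _ hE₀.ne' hE_fin.ne hc₀ ofReal_ne_top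
          (hslices.volume_support_ne_zero hF hF₀.ne')
          (hslices.volume_support_ne_top hF hc₀ hF_fin.ne) ε hε
          (incidence_le_restrictedBound_zero hE hF c)
          (hK E F hE hF hE_fin.ne hF_fin.ne c ofReal_ne_top hslices)
          ((mul_le_mul_right hnorm _).trans hquasi)
    _ ≤ _ := mul_le_mul_right hnorm _

end
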